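/- Let P be a finite set of points and Γ a finite set of irreducible plane curves such that every curve in Γ has degree at most d, any two distinct curves of Γ intersect in at most M points, and any two distinct points of P lie on at most M common curves of Γ. Then the number of incidences I(P, Γ) satisfies I(P, Γ) ≤ C(d, M)·(|P|^{2/3}|Γ|^{2/3} + |P| + |Γ|). -/

import Mathlib

open scoped Classical

/-!
Off its finitely many critical abscissae, a non-vertical irreducible curve is a covering of the
`x`-axis, so it is cut into a bounded number of points and graphs of continuous functions over
intervals. Joining consecutive points of `P` along each of these arcs draws a simple graph whose
crossings are common points of two arcs, and the crossing lemma bounds its number of edges.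

Sweeping a vertical line turns such a drawing into a sequence of orderings of the active edges, and
a crossing of two edges into an exchange of their order between consecutive abscissae. This makes
planarity combinatorial: if no two edges cross, then the order is preserved. Charge an edge to the
first vertex met by the wedge between it and the edge that leaves the same source directly above it,
and charge it to its source if there is no such edge. No vertex is charged more than three times, so
a plane drawing has at most three times as many edges as vertices. Random sampling amplifies this
linear bound to the crossing lemma, once all crossings of edges with a common endpoint have been
removed by exchanging their portions on one side of the crossing.
-/

namespace IncidenceBound

open Finset Equiv

/-! ### Inversions of a sequence of orderings -/

section Inversions

variable {α β : Type*} [LinearOrder β]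

/-- The pairs of elements of `A` that two orderings `s` and `s'` rank in opposite ways, each
unordered pair being listed in the order given by `s`. -/
noncomputable def inversions (A : Finset α) (s s' : α → β) : Finset (α × α) :=
  {p ∈ A ×ˢ A | s p.1 < s p.2 ∧ s' p.2 < s' p.1}

lemma mem_inversions {A : Finset α} {s s' : α → β} {p : α × α} :
    p ∈ inversions A s s' ↔ (p.1 ∈ A ∧ p.2 ∈ A) ∧ s p.1 < s p.2 ∧ s' p.2 < s' p.1 := by
  simp only [inversions, mem_filter, mem_product]

lemma card_inversions_comp_perm {A : Finset α} {σ : Perm α} (hσ : ∀ a, σ a ∈ A ↔ a ∈ A)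
    (s s' : α → β) : #(inversions A (s ∘ σ) (s' ∘ σ)) = #(inversions A s s') :=
  card_equiv (σ.prodCongr σ) fun p => by simp [mem_inversions, hσ]

private lemma card_inversions_eq_sum (A : Finset α) (s s' : α → β) :
    (#(inversions A s s') : ℤ) = ∑ p ∈ A ×ˢ A,
      (if s p.1 < s p.2 then 1 else 0) * (if s' p.2 < s' p.1 then 1 else 0) := by
  simp only [inversions, card_filter, ite_and, Nat.cast_sum, Nat.cast_ite, ite_mul, one_mul,
    zero_mul, Nat.cast_one, Nat.cast_zero]

/-- Averaging over the involution `swap e f`, the change in the number of inversions becomes a sum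
of products of two differences of indicators, and both factors always have the same sign. -/
lemma card_inversions_comp_swap_lt {A : Finset α} {s s' : α → β} {e f : α}
    (h : (e, f) ∈ inversions A s s') :
    #(inversions A (s ∘ swap e f) s') < #(inversions A s s') := by
  obtain ⟨⟨he, hf⟩, hs, hs'⟩ : (e ∈ A ∧ f ∈ A) ∧ s e < s f ∧ s' f < s' e := mem_inversions.1 h
  have hA (a : α) : swap e f a ∈ A ↔ a ∈ A :=
    iff_of_eq (apply_swap_eq_self (v := (· ∈ A)) (by simp [he, hf]) a)
  let u (p : α × α) : ℤ := if s p.1 < s p.2 then 1 else 0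
  let v (p : α × α) : ℤ := if s' p.2 < s' p.1 then 1 else 0
  let τ : Perm (α × α) := (swap e f).prodCongr (swap e f)
  have hcard : (#(inversions A s s') : ℤ) = ∑ p ∈ A ×ˢ A, u p * v p :=
    card_inversions_eq_sum A s s'
  have hcard_swap : (#(inversions A s s') : ℤ) = ∑ p ∈ A ×ˢ A, u (τ p) * v (τ p) := by
    rw [← card_inversions_comp_perm hA]; exact card_inversions_eq_sum A _ _
  have hcard' : (#(inversions A (s ∘ swap e f) s') : ℤ) = ∑ p ∈ A ×ˢ A, u (τ p) * v p :=
    card_inversions_eq_sum A _ _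
  have hcard'_swap : (#(inversions A (s ∘ swap e f) s') : ℤ) = ∑ p ∈ A ×ˢ A, u p * v (τ p) := by
    rw [← card_inversions_comp_perm hA, card_inversions_eq_sum]
    simp only [Function.comp_apply, swap_apply_self]
    rfl
  have hpos : 0 < ∑ p ∈ A ×ˢ A, (u p - u (τ p)) * (v p - v (τ p)) := by
    refine sum_pos' (fun p _ => ?_) ⟨(e, f), mk_mem_product he hf, ?_⟩
    · obtain ⟨g, k⟩ := p
      simp only [u, v, τ, prodCongr_apply, Prod.map, swap_apply_def]
      grind
    · simp [u, v, τ, hs, hs', hs.not_gt, hs'.not_gt]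
  have hexpand : ∑ p ∈ A ×ˢ A, (u p - u (τ p)) * (v p - v (τ p)) =
      2 * (#(inversions A s s') : ℤ) - 2 * #(inversions A (s ∘ swap e f) s') := by
    simp only [sub_mul, mul_sub, sum_sub_distrib]
    linarith
  omega

lemma card_inversions_comp_swap_right_lt {A : Finset α} {s s' : α → β} {e f : α}
    (h : (e, f) ∈ inversions A s s') :
    #(inversions A s (s' ∘ swap e f)) < #(inversions A s s') := by
  obtain ⟨⟨he, hf⟩, -⟩ := mem_inversions.1 h
  have hA (a : α) : swap e f a ∈ A ↔ a ∈ A :=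
    iff_of_eq (apply_swap_eq_self (v := (· ∈ A)) (by simp [he, hf]) a)
  rw [← card_inversions_comp_perm hA, Function.comp_assoc, ← Perm.coe_mul, swap_mul_self]
  exact card_inversions_comp_swap_lt h

end Inversions

/-! ### Monotone drawings and their crossings -/

/-- An abstract graph whose edges are to be drawn as `x`-monotone curves, the abscissa of a vertex
being recorded by its position `time v` in a finite sequence of critical abscissae. -/
structure MonotoneGraph (V E : Type*) where
  time : V → ℕ
  height : V → ℝ
  src : E → V
  tgt : E → V
  time_src_lt : ∀ e, time (src e) < time (tgt e)

/-- Twice the height of an edge in the middle of the gap between the times `t` and `t + 1`, if the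
edge has height `y e t` at the time `t` and is drawn linearly in between. -/
def gapHeight {E : Type*} (y : E → ℕ → ℝ) (t : ℕ) (e : E) : ℝ := y e t + y e (t + 1)

namespace MonotoneGraph

variable {V E : Type*} (G : MonotoneGraph V E) {y : E → ℕ → ℝ} {e f : E} {t : ℕ}

/-- The edge `e` spans the gap between the times `t` and `t + 1`. -/
def Active (e : E) (t : ℕ) : Prop := G.time (G.src e) ≤ t ∧ t < G.time (G.tgt e)

/-- The heights `y e t` of the edges at the critical times describe a drawing of `G`: an edge meets
exactly those vertices that are its endpoints, and two edges meet in a gap at most at one of its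
two ends. -/
structure IsDrawing (y : E → ℕ → ℝ) : Prop where
  eq_height_iff : ∀ {e v}, G.time (G.src e) ≤ G.time v → G.time v ≤ G.time (G.tgt e) →
    (y e (G.time v) = G.height v ↔ v = G.src e ∨ v = G.tgt e)
  succ_le_succ : ∀ {e f t}, G.Active e t → G.Active f t → y e t < y f t →
    y e (t + 1) ≤ y f (t + 1)
  succ_ne_succ : ∀ {e f t}, e ≠ f → G.Active e t → G.Active f t → y e t = y f t →
    y e (t + 1) ≠ y f (t + 1)

variable {G}

lemma active_time_src (e : E) : G.Active e (G.time (G.src e)) := ⟨le_rfl, G.time_src_lt e⟩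

namespace IsDrawing

lemma apply_src (hy : G.IsDrawing y) (e : E) : y e (G.time (G.src e)) = G.height (G.src e) :=
  (hy.eq_height_iff le_rfl (G.time_src_lt e).le).2 (.inl rfl)

lemma apply_tgt (hy : G.IsDrawing y) (e : E) : y e (G.time (G.tgt e)) = G.height (G.tgt e) :=
  (hy.eq_height_iff (G.time_src_lt e).le le_rfl).2 (.inr rfl)

lemma gapHeight_lt_of_lt (hy : G.IsDrawing y) (he : G.Active e t) (hf : G.Active f t)
    (h : y e t < y f t) : gapHeight y t e < gapHeight y t f :=
  add_lt_add_of_lt_of_le h (hy.succ_le_succ he hf h)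

lemma gapHeight_lt_of_succ_lt (hy : G.IsDrawing y) (he : G.Active e t) (hf : G.Active f t)
    (h : y e (t + 1) < y f (t + 1)) : gapHeight y t e < gapHeight y t f :=
  add_lt_add_of_le_of_lt (not_lt.1 fun h' => (hy.succ_le_succ hf he h').not_gt h) h

lemma le_of_gapHeight_lt (hy : G.IsDrawing y) (he : G.Active e t) (hf : G.Active f t)
    (h : gapHeight y t e < gapHeight y t f) : y e t ≤ y f t :=
  not_lt.1 fun h' => (hy.gapHeight_lt_of_lt hf he h').not_gt h

lemma succ_le_succ_of_gapHeight_lt (hy : G.IsDrawing y) (he : G.Active e t) (hf : G.Active f t)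
    (h : gapHeight y t e < gapHeight y t f) : y e (t + 1) ≤ y f (t + 1) :=
  not_lt.1 fun h' => (hy.gapHeight_lt_of_succ_lt hf he h').not_gt h

lemma gapHeight_ne (hy : G.IsDrawing y) (hne : e ≠ f) (he : G.Active e t) (hf : G.Active f t) :
    gapHeight y t e ≠ gapHeight y t f := by
  rcases lt_trichotomy (y e t) (y f t) with h | h | h
  · exact (hy.gapHeight_lt_of_lt he hf h).ne
  · simpa [gapHeight, h] using hy.succ_ne_succ hne he hf h
  · exact (hy.gapHeight_lt_of_lt hf he h).ne'

end IsDrawing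

section Crossings

variable [Fintype E]

/-- The pairs of edges that cross at the time `t + 1`. -/
noncomputable def crossings (G : MonotoneGraph V E) (y : E → ℕ → ℝ) (t : ℕ) : Finset (E × E) :=
  inversions {e | G.Active e t ∧ G.Active e (t + 1)} (gapHeight y t) (gapHeight y (t + 1))

lemma mem_crossings : (e, f) ∈ G.crossings y t ↔
    ((G.Active e t ∧ G.Active e (t + 1)) ∧ G.Active f t ∧ G.Active f (t + 1)) ∧
      gapHeight y t e < gapHeight y t f ∧ gapHeight y (t + 1) f < gapHeight y (t + 1) e := by
  simp only [crossings, mem_inversions, mem_filter, mem_univ, true_and]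

lemma IsDrawing.succ_eq_succ_of_mem_crossings (hy : G.IsDrawing y)
    (h : (e, f) ∈ G.crossings y t) : y e (t + 1) = y f (t + 1) := by
  obtain ⟨⟨⟨he, he'⟩, hf, hf'⟩, hlt, hgt⟩ := mem_crossings.1 h
  exact (hy.succ_le_succ_of_gapHeight_lt he hf hlt).antisymm (hy.le_of_gapHeight_lt hf' he' hgt)

/-- All crossings of a drawing, each one together with the gap that precedes it. -/
noncomputable def allCrossings (G : MonotoneGraph V E) (y : E → ℕ → ℝ) :
    Finset (Σ _ : ℕ, E × E) :=
  (range (univ.sup (G.time ∘ G.tgt))).sigma (G.crossings y)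

lemma mem_allCrossings {x : Σ _ : ℕ, E × E} :
    x ∈ G.allCrossings y ↔ x.2 ∈ G.crossings y x.1 := by
  rw [allCrossings, mem_sigma, mem_range, and_iff_right_iff_imp]
  exact fun h => (mem_crossings.1 h).1.1.1.2.trans_le <|
    le_sup (f := G.time ∘ G.tgt) (mem_univ x.2.1)

end Crossings

section Exchange

/-- The edges `e` and `f` can be exchanged at the time `t` without affecting which edges are
present there and which vertices they reach. -/
structure ExchangeableAt (G : MonotoneGraph V E) (e f : E) (t : ℕ) : Prop where
  time_src_le_iff : G.time (G.src e) ≤ t ↔ G.time (G.src f) ≤ t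
  lt_time_tgt_iff : t < G.time (G.tgt e) ↔ t < G.time (G.tgt f)
  le_time_tgt_iff : t ≤ G.time (G.tgt e) ↔ t ≤ G.time (G.tgt f)
  endpoint_iff : ∀ {v}, G.time v = t → (v = G.src e ∨ v = G.tgt e ↔ v = G.src f ∨ v = G.tgt f)

/-- The permutation that exchanges `e` and `f` at the times in `S`. -/
noncomputable def exchangePerm (e f : E) (S : Set ℕ) (t : ℕ) : Perm E :=
  if t ∈ S then swap e f else 1

/-- The edges `e` and `f` exchange their heights at the times in `S`. -/
noncomputable def exchangeHeights (y : E → ℕ → ℝ) (e f : E) (S : Set ℕ) : E → ℕ → ℝ :=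
  fun g t => y (exchangePerm e f S t g) t

variable {S : Set ℕ}

lemma apply_exchangePerm {β : Type*} {φ : E → β} (hφ : t ∈ S → φ e = φ f) (g : E) :
    φ (exchangePerm e f S t g) = φ g := by
  rw [exchangePerm]
  split_ifs with ht
  · exact apply_swap_eq_self (hφ ht) g
  · rfl

lemma active_exchangePerm_iff (hS : ∀ t ∈ S, G.ExchangeableAt e f t) (g : E) :
    G.Active (exchangePerm e f S t g) t ↔ G.Active g t :=
  iff_of_eq <| apply_exchangePerm (φ := (G.Active · t)) (fun ht => propext <|
    and_congr (hS t ht).time_src_le_iff (hS t ht).lt_time_tgt_iff) g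

lemma apply_exchangePerm_succ (hmeet : (t ∈ S ↔ t + 1 ∈ S) ∨ y e (t + 1) = y f (t + 1)) (g : E) :
    y (exchangePerm e f S (t + 1) g) (t + 1) = y (exchangePerm e f S t g) (t + 1) := by
  rcases hmeet with h | h
  · simp only [exchangePerm, h]
  · rw [apply_exchangePerm (φ := (y · (t + 1))) fun _ => h,
      apply_exchangePerm (φ := (y · (t + 1))) fun _ => h]

lemma gapHeight_exchangeHeights
    (hmeet : ∀ t, (t ∈ S ↔ t + 1 ∈ S) ∨ y e (t + 1) = y f (t + 1)) (t : ℕ) :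
    gapHeight (exchangeHeights y e f S) t = gapHeight y t ∘ exchangePerm e f S t := by
  funext g
  simp only [gapHeight, exchangeHeights, Function.comp_apply, apply_exchangePerm_succ (hmeet t)]

lemma isDrawing_exchangeHeights (hy : G.IsDrawing y) (hS : ∀ t ∈ S, G.ExchangeableAt e f t)
    (hmeet : ∀ t, (t ∈ S ↔ t + 1 ∈ S) ∨ y e (t + 1) = y f (t + 1)) :
    G.IsDrawing (exchangeHeights y e f S) where
  eq_height_iff {g v} h₁ h₂ := by
    rw [exchangeHeights, hy.eq_height_iff]
    · exact iff_of_eq <| apply_exchangePerm (φ := fun g => v = G.src g ∨ v = G.tgt g)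
        (fun ht => propext ((hS _ ht).endpoint_iff rfl)) g
    · rwa [apply_exchangePerm (φ := fun g => G.time (G.src g) ≤ G.time v)
        (fun ht => propext (hS _ ht).time_src_le_iff) g]
    · rwa [apply_exchangePerm (φ := fun g => G.time v ≤ G.time (G.tgt g))
        (fun ht => propext (hS _ ht).le_time_tgt_iff) g]
  succ_le_succ {g k t} hg hk h := by
    simp only [exchangeHeights, apply_exchangePerm_succ (hmeet t)]
    exact hy.succ_le_succ ((active_exchangePerm_iff hS g).2 hg)
      ((active_exchangePerm_iff hS k).2 hk) h
  succ_ne_succ {g k t} hne hg hk h := by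
    simp only [exchangeHeights, apply_exchangePerm_succ (hmeet t)]
    exact hy.succ_ne_succ ((exchangePerm e f S t).injective.ne hne)
      ((active_exchangePerm_iff hS g).2 hg) ((active_exchangePerm_iff hS k).2 hk) h

variable [Fintype E]

lemma card_crossings_exchangeHeights (hS : ∀ t ∈ S, G.ExchangeableAt e f t)
    (hmeet : ∀ t, (t ∈ S ↔ t + 1 ∈ S) ∨ y e (t + 1) = y f (t + 1)) (ht : t ∈ S ↔ t + 1 ∈ S) :
    #(G.crossings (exchangeHeights y e f S) t) = #(G.crossings y t) := by
  have hperm : exchangePerm e f S (t + 1) = exchangePerm e f S t := by simp only [exchangePerm, ht]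
  rw [crossings, gapHeight_exchangeHeights hmeet, gapHeight_exchangeHeights hmeet, hperm,
    card_inversions_comp_perm, crossings]
  intro g
  have hsucc := active_exchangePerm_iff (t := t + 1) hS g
  rw [hperm] at hsucc
  simp only [mem_filter, mem_univ, true_and, active_exchangePerm_iff hS, hsucc]

lemma card_crossings_exchangeHeights_lt (hef : (e, f) ∈ G.crossings y t)
    (hmeet : ∀ t, (t ∈ S ↔ t + 1 ∈ S) ∨ y e (t + 1) = y f (t + 1)) (ht : ¬(t ∈ S ↔ t + 1 ∈ S)) :
    #(G.crossings (exchangeHeights y e f S) t) < #(G.crossings y t) := by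
  rw [crossings, gapHeight_exchangeHeights hmeet, gapHeight_exchangeHeights hmeet, crossings]
  by_cases htS : t ∈ S
  · have hsucc : t + 1 ∉ S := fun h => ht (iff_of_true htS h)
    simpa only [exchangePerm, htS, hsucc, if_true, if_false,
      Perm.coe_one, Function.comp_id] using card_inversions_comp_swap_lt hef
  · have hsucc : t + 1 ∈ S := not_not.1 fun h => ht (iff_of_false htS h)
    simpa only [exchangePerm, htS, hsucc, if_true, if_false,
      Perm.coe_one, Function.comp_id] using
      card_inversions_comp_swap_right_lt hef

lemma card_allCrossings_exchangeHeights_lt (hS : ∀ t ∈ S, G.ExchangeableAt e f t)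
    (hmeet : ∀ t, (t ∈ S ↔ t + 1 ∈ S) ∨ y e (t + 1) = y f (t + 1)) {i : ℕ}
    (hef : (e, f) ∈ G.crossings y i) (hi : ¬(i ∈ S ↔ i + 1 ∈ S))
    (hne : ∀ t ≠ i, (t ∈ S ↔ t + 1 ∈ S)) :
    #(G.allCrossings (exchangeHeights y e f S)) < #(G.allCrossings y) := by
  have hlt := card_crossings_exchangeHeights_lt hef hmeet hi
  rw [allCrossings, allCrossings, card_sigma, card_sigma]
  have hirange := (mem_sigma.1 (mem_allCrossings (x := ⟨i, e, f⟩).2 hef)).1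
  refine sum_lt_sum (fun t _ => ?_) ⟨i, hirange, hlt⟩
  rcases eq_or_ne t i with rfl | hti
  · exact hlt.le
  · exact (card_crossings_exchangeHeights hS hmeet (hne t hti)).le

lemma IsDrawing.exists_card_allCrossings_lt (hy : G.IsDrawing y) {i : ℕ}
    (hef : (e, f) ∈ G.crossings y i) (hadj : G.src e = G.src f ∨ G.tgt e = G.tgt f) :
    ∃ y', G.IsDrawing y' ∧ #(G.allCrossings y') < #(G.allCrossings y) := by
  have hmeet := hy.succ_eq_succ_of_mem_crossings hef
  obtain ⟨⟨⟨hei, hei'⟩, hfi, hfi'⟩, -⟩ := mem_crossings.1 hef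
  unfold Active at hei hei' hfi hfi'
  suffices ∃ S : Set ℕ, (∀ t ∈ S, G.ExchangeableAt e f t) ∧ ¬(i ∈ S ↔ i + 1 ∈ S) ∧
      ∀ t ≠ i, (t ∈ S ↔ t + 1 ∈ S) by
    obtain ⟨S, hS, hi, hne⟩ := this
    have hmeet' (t : ℕ) : (t ∈ S ↔ t + 1 ∈ S) ∨ y e (t + 1) = y f (t + 1) := by
      rcases eq_or_ne t i with rfl | hti
      exacts [.inr hmeet, .inl (hne t hti)]
    exact ⟨exchangeHeights y e f S, isDrawing_exchangeHeights hy hS hmeet',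
      card_allCrossings_exchangeHeights_lt hS hmeet' hef hi hne⟩
  rcases hadj with hsrc | htgt
  · refine ⟨Set.Iic i, fun t (ht : t ≤ i) => ⟨by rw [hsrc], by lia, by lia, fun {v} hv => ?_⟩,
      by simp, fun t ht => by simp only [Set.mem_Iic]; lia⟩
    have hve : v ≠ G.tgt e := by rintro rfl; lia
    have hvf : v ≠ G.tgt f := by rintro rfl; lia
    simp only [hve, hvf, hsrc]
  · refine ⟨Set.Ioi i, fun t (ht : i < t) => ⟨by lia, by rw [htgt], by rw [htgt], fun {v} hv => ?_⟩,
      by simp, fun t ht => by simp only [Set.mem_Ioi]; lia⟩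
    have hve : v ≠ G.src e := by rintro rfl; lia
    have hvf : v ≠ G.src f := by rintro rfl; lia
    simp only [hve, hvf, htgt]

lemma IsDrawing.exists_forall_crossings_not_adjacent (hy : G.IsDrawing y) :
    ∃ y', G.IsDrawing y' ∧ #(G.allCrossings y') ≤ #(G.allCrossings y) ∧
      ∀ i e f, (e, f) ∈ G.crossings y' i → G.src e ≠ G.src f ∧ G.tgt e ≠ G.tgt f := by
  obtain ⟨y', hy', hmin⟩ := exists_minimalFor_of_wellFoundedLT G.IsDrawing
    (fun y => #(G.allCrossings y)) ⟨y, hy⟩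
  have hle {z} (hz : G.IsDrawing z) : #(G.allCrossings y') ≤ #(G.allCrossings z) :=
    (le_total _ _).elim id (hmin hz)
  refine ⟨y', hy', hle hy, fun i e f hef => not_or.1 fun hadj => ?_⟩
  obtain ⟨z, hz, hlt⟩ := hy'.exists_card_allCrossings_lt hef hadj
  exact hlt.not_ge (hle hz)

end Exchange

end MonotoneGraph

/-! ### Plane drawings -/

namespace MonotoneGraph

section Planar

variable {V E : Type*} [Fintype E] {G : MonotoneGraph V E} {y : E → ℕ → ℝ} {F : Finset E}
  {W : Finset V} {e e' f f' g : E} {s t : ℕ} {u w : V}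

/-- The edges in `F` form a simple graph on the vertex set `W`, drawn by `y` without crossings. -/
structure IsPlaneSubgraph (G : MonotoneGraph V E) (y : E → ℕ → ℝ) (F : Finset E) (W : Finset V) :
    Prop where
  isDrawing : G.IsDrawing y
  src_mem : ∀ {e}, e ∈ F → G.src e ∈ W
  tgt_mem : ∀ {e}, e ∈ F → G.tgt e ∈ W
  simple : ∀ {e f}, e ∈ F → f ∈ F → G.src e = G.src f → G.tgt e = G.tgt f → e = f
  notMem_crossings : ∀ {e f t}, e ∈ F → f ∈ F → (e, f) ∉ G.crossings y t

/-- Among the edges in `F` that start at the same vertex as `e`, the edge `f` is the one that leaves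
directly above `e`. -/
structure IsNextAbove (G : MonotoneGraph V E) (y : E → ℕ → ℝ) (F : Finset E) (e f : E) : Prop where
  mem : f ∈ F
  src_eq : G.src f = G.src e
  gapHeight_lt : gapHeight y (G.time (G.src e)) e < gapHeight y (G.time (G.src e)) f
  gapHeight_le : ∀ {g}, g ∈ F → G.src g = G.src e →
    gapHeight y (G.time (G.src e)) e < gapHeight y (G.time (G.src e)) g →
      gapHeight y (G.time (G.src e)) f ≤ gapHeight y (G.time (G.src e)) g

/-- The vertex `u` lies in the closed region between the edges `e` and `f` which starts at the
common source of `e` and `f` and ends at the time at which the first of them ends. -/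
structure InWedge (G : MonotoneGraph V E) (y : E → ℕ → ℝ) (e f : E) (u : V) : Prop where
  time_src_lt : G.time (G.src e) < G.time u
  le_time_tgt_left : G.time u ≤ G.time (G.tgt e)
  le_time_tgt_right : G.time u ≤ G.time (G.tgt f)
  le_height : y e (G.time u) ≤ G.height u
  height_le : G.height u ≤ y f (G.time u)

/-- The edge `f` is the next one above `e`, and `u` is an earliest vertex of `W` in the wedge
between them. -/
structure IsFirstInWedge (G : MonotoneGraph V E) (y : E → ℕ → ℝ) (F : Finset E) (W : Finset V)
    (e f : E) (u : V) : Prop where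
  isNextAbove : G.IsNextAbove y F e f
  mem : u ∈ W
  inWedge : G.InWedge y e f u
  time_le : ∀ {w}, w ∈ W → G.InWedge y e f w → G.time u ≤ G.time w

lemma IsDrawing.gapHeight_lt_mono (hy : G.IsDrawing y) (hef : ∀ t, (e, f) ∉ G.crossings y t)
    (hst : s ≤ t) (hes : G.Active e s) (hfs : G.Active f s) (het : G.Active e t)
    (hft : G.Active f t) (h : gapHeight y s e < gapHeight y s f) :
    gapHeight y t e < gapHeight y t f := by
  induction t, hst using Nat.le_induction with
  | base => exact h
  | succ t hst ih =>
    have he : G.Active e t := ⟨hes.1.trans hst, (Nat.lt_succ_self t).trans het.2⟩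
    have hf : G.Active f t := ⟨hfs.1.trans hst, (Nat.lt_succ_self t).trans hft.2⟩
    have hne : e ≠ f := by rintro rfl; exact h.false
    refine (hy.gapHeight_ne hne het hft).lt_of_le (not_lt.1 fun hgt => hef t ?_)
    exact mem_crossings.2 ⟨⟨⟨he, het⟩, hf, hft⟩, ih he hf, hgt⟩

namespace IsPlaneSubgraph

lemma gapHeight_lt_iff (h : G.IsPlaneSubgraph y F W) (he : e ∈ F) (hf : f ∈ F)
    (hes : G.Active e s) (hfs : G.Active f s) (het : G.Active e t) (hft : G.Active f t) :
    gapHeight y s e < gapHeight y s f ↔ gapHeight y t e < gapHeight y t f := by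
  wlog hst : s ≤ t generalizing s t
  · exact (this het hft hes hfs (le_of_not_ge hst)).symm
  have hy := h.isDrawing
  refine ⟨hy.gapHeight_lt_mono (fun _ => h.notMem_crossings he hf) hst hes hfs het hft,
    fun hlt => ?_⟩
  have hne : e ≠ f := by rintro rfl; exact hlt.false
  refine (hy.gapHeight_ne hne hes hfs).lt_of_le (not_lt.1 fun hgt => hlt.not_gt ?_)
  exact hy.gapHeight_lt_mono (fun _ => h.notMem_crossings hf he) hst hfs hes hft het hgt

lemma exists_isFirstInWedge (h : G.IsPlaneSubgraph y F W) (he : e ∈ F)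
    (hef : G.IsNextAbove y F e f) : ∃ u, G.IsFirstInWedge y F W e f u := by
  have hy := h.isDrawing
  suffices {u ∈ W | G.InWedge y e f u}.Nonempty by
    obtain ⟨u, hu, hmin⟩ := exists_min_image _ G.time this
    rw [mem_filter] at hu
    exact ⟨u, hef, hu.1, hu.2, fun hw hwedge => hmin _ (mem_filter.2 ⟨hw, hwedge⟩)⟩
  have hsrc := hef.src_eq
  have hle {t : ℕ} (hts : G.time (G.src e) < t) (hte : t ≤ G.time (G.tgt e))
      (htf : t ≤ G.time (G.tgt f)) : y e t ≤ y f t := by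
    obtain ⟨i, rfl⟩ : ∃ i, t = i + 1 := ⟨t - 1, by lia⟩
    have hei : G.Active e i := ⟨by lia, by lia⟩
    have hfi : G.Active f i := ⟨by rw [hsrc]; lia, by lia⟩
    exact hy.succ_le_succ_of_gapHeight_lt hei hfi <|
      (h.gapHeight_lt_iff he hef.mem (active_time_src e) (hsrc ▸ active_time_src f) hei hfi).1
        hef.gapHeight_lt
  have hte := G.time_src_lt e
  have htf : G.time (G.src e) < G.time (G.tgt f) := hsrc ▸ G.time_src_lt f
  rcases le_total (G.time (G.tgt e)) (G.time (G.tgt f)) with hc | hc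
  · refine ⟨G.tgt e, mem_filter.2 ⟨h.tgt_mem he, hte, le_rfl, hc, (hy.apply_tgt e).le, ?_⟩⟩
    exact hy.apply_tgt e ▸ hle hte le_rfl hc
  · refine ⟨G.tgt f, mem_filter.2 ⟨h.tgt_mem hef.mem, htf, hc, le_rfl, ?_, (hy.apply_tgt f).ge⟩⟩
    exact hy.apply_tgt f ▸ hle htf hc le_rfl

lemma gapHeight_le_of_isFirstInWedge (h : G.IsPlaneSubgraph y F W) (he : e ∈ F)
    (hu : G.IsFirstInWedge y F W e f u) (htu : G.time u = t + 1) (hg : g ∈ F)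
    (hgt : G.Active g t) (heg : gapHeight y t e < gapHeight y t g) :
    gapHeight y t f ≤ gapHeight y t g := by
  by_contra! hgf
  have hy := h.isDrawing
  obtain ⟨⟨hf, hsrc, -, hnext⟩, -, ⟨hlt, hue, huf, -, -⟩, hmin⟩ := hu
  have active_of {i : ℕ} (h₁ : G.time (G.src e) ≤ i) (h₂ : i ≤ t) :
      G.Active e i ∧ G.Active f i := ⟨⟨h₁, by lia⟩, by rwa [hsrc], by lia⟩
  obtain ⟨het, hft⟩ := active_of (by lia) le_rfl
  have between {i : ℕ} (h₁ : G.time (G.src e) ≤ i) (h₂ : G.time (G.src g) ≤ i) (h₃ : i ≤ t) :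
      gapHeight y i e < gapHeight y i g ∧ gapHeight y i g < gapHeight y i f := by
    obtain ⟨hei, hfi⟩ := active_of h₁ h₃
    have hgi : G.Active g i := ⟨h₂, h₃.trans_lt hgt.2⟩
    exact ⟨(h.gapHeight_lt_iff he hg hei hgi het hgt).2 heg,
      (h.gapHeight_lt_iff hg hf hgi hfi hgt hft).2 hgf⟩
  have le_height {i : ℕ} (h₁ : G.time (G.src e) ≤ i) (h₂ : G.time (G.src g) ≤ i) (h₃ : i ≤ t) :
      y e i ≤ y g i ∧ y g i ≤ y f i := by
    obtain ⟨hei, hfi⟩ := active_of h₁ h₃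
    have hgi : G.Active g i := ⟨h₂, h₃.trans_lt hgt.2⟩
    exact ⟨hy.le_of_gapHeight_lt hei hgi (between h₁ h₂ h₃).1,
      hy.le_of_gapHeight_lt hgi hfi (between h₁ h₂ h₃).2⟩
  rcases lt_or_ge (G.time (G.src e)) (G.time (G.src g)) with hc | hc
  · obtain ⟨hl, hr⟩ := le_height hc.le le_rfl hgt.1
    rw [hy.apply_src g] at hl hr
    have := hgt.1
    have := hmin (h.src_mem hg) ⟨hc, by lia, by lia, hl, hr⟩
    lia
  · obtain ⟨hl, hr⟩ := le_height le_rfl hc het.1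
    rw [hy.apply_src e] at hl
    rw [← hsrc, hy.apply_src f, hsrc] at hr
    have hsrc_or := (hy.eq_height_iff hc (het.1.trans hgt.2.le)).1 (hr.antisymm hl)
    have hne : G.src e ≠ G.tgt g := fun heq => (het.1.trans_lt hgt.2).ne (congrArg G.time heq)
    obtain ⟨hl, hr⟩ := between le_rfl hc het.1
    exact (hnext hg (hsrc_or.resolve_right hne).symm hl).not_gt hr

lemma height_lt_iff_not_of_gapHeight_le (h : G.IsPlaneSubgraph y F W) (he' : e' ∈ F)
    (hu : G.IsFirstInWedge y F W e f u) (hu' : G.IsFirstInWedge y F W e' f' u)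
    (htu : G.time u = t + 1) (hle : gapHeight y t f ≤ gapHeight y t e') :
    G.height u < y f (G.time u) ↔ ¬ G.height u < y f' (G.time u) := by
  have hy := h.isDrawing
  obtain ⟨⟨-, hsrc, -, -⟩, -, ⟨hlt, -, huf, -, hhf⟩, -⟩ := hu
  obtain ⟨⟨hf', hsrc', hgap', -⟩, -, ⟨hlt', hue', huf', hhe', hhf'⟩, -⟩ := hu'
  have hft : G.Active f t := ⟨by rw [hsrc]; lia, by lia⟩
  have het' : G.Active e' t := ⟨by lia, by lia⟩
  have hfe' : y f (G.time u) ≤ y e' (G.time u) := by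
    rcases eq_or_ne f e' with rfl | hne
    · rfl
    · exact htu ▸ hy.succ_le_succ_of_gapHeight_lt hft het'
        ((hy.gapHeight_ne hne hft het').lt_of_le hle)
  refine iff_of_false (hfe'.trans hhe').not_gt (not_not.2 (hhf'.lt_of_ne fun heq => ?_))
  have hu_ne : u ≠ G.src e' := by rintro rfl; exact hlt'.false
  have htgt : u = G.tgt e' :=
    ((hy.eq_height_iff hlt'.le hue').1 (hhe'.antisymm (hhf.trans hfe'))).resolve_left hu_ne
  have htgt' : u = G.tgt f' := ((hy.eq_height_iff (hsrc' ▸ hlt'.le) huf').1 heq.symm).resolve_left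
    (hsrc' ▸ hu_ne)
  obtain rfl := h.simple he' hf' hsrc'.symm (htgt.symm.trans htgt')
  exact hgap'.false

lemma eq_of_isFirstInWedge (h : G.IsPlaneSubgraph y F W) (he : e ∈ F) (he' : e' ∈ F)
    (hu : G.IsFirstInWedge y F W e f u) (hu' : G.IsFirstInWedge y F W e' f' u)
    (hiff : G.height u < y f (G.time u) ↔ G.height u < y f' (G.time u)) : e = e' := by
  obtain ⟨t, ht⟩ : ∃ t, G.time u = t + 1 :=
    ⟨G.time u - 1, by have := hu.inWedge.time_src_lt; lia⟩
  have active {g k : E} (hg : G.IsFirstInWedge y F W g k u) : G.Active g t :=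
    ⟨by have := hg.inWedge.time_src_lt; lia, by have := hg.inWedge.le_time_tgt_left; lia⟩
  by_contra hne
  rcases (h.isDrawing.gapHeight_ne hne (active hu) (active hu')).lt_or_gt with hlt | hlt
  · have hnot := h.height_lt_iff_not_of_gapHeight_le he' hu hu' ht
      (h.gapHeight_le_of_isFirstInWedge he hu ht he' (active hu') hlt)
    exact iff_not_self (hiff.symm.trans hnot)
  · have hnot := h.height_lt_iff_not_of_gapHeight_le he hu' hu ht
      (h.gapHeight_le_of_isFirstInWedge he' hu' ht he (active hu) hlt)
    exact iff_not_self (hiff.trans hnot)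

lemma card_filter_exists_isNextAbove_le (h : G.IsPlaneSubgraph y F W) :
    #{e ∈ F | ∃ f, G.IsNextAbove y F e f} ≤ 2 * #W := by
  rcases isEmpty_or_nonempty E with _ | ⟨⟨e₀⟩⟩
  · simp
  have : Nonempty V := ⟨G.src e₀⟩
  have hex (e : E) (he : e ∈ ({e ∈ F | ∃ f, G.IsNextAbove y F e f} : Finset E)) :
      ∃ f u, e ∈ F ∧ G.IsFirstInWedge y F W e f u := by
    obtain ⟨heF, f, hf⟩ := mem_filter.1 he
    obtain ⟨u, hu⟩ := h.exists_isFirstInWedge heF hf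
    exact ⟨f, u, heF, hu⟩
  choose! next first hF hfirst using hex
  calc #{e ∈ F | ∃ f, G.IsNextAbove y F e f}
      ≤ #(W ×ˢ (univ : Finset Bool)) := by
        refine card_le_card_of_injOn
          (fun e => (first e, decide (G.height (first e) < y (next e) (G.time (first e)))))
          (fun e he => mem_product.2 ⟨(hfirst e he).mem, mem_univ _⟩) fun e he e' he' heq => ?_
        obtain ⟨hu, hiff⟩ := Prod.mk.inj heq
        rw [decide_eq_decide, ← hu] at hiff
        exact h.eq_of_isFirstInWedge (hF e he) (hF e' he') (hfirst e he) (hu ▸ hfirst e' he') hiff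
    _ = 2 * #W := by rw [card_product, card_univ, Fintype.card_bool, mul_comm]

lemma card_filter_not_exists_isNextAbove_le (h : G.IsPlaneSubgraph y F W) :
    #{e ∈ F | ¬ ∃ f, G.IsNextAbove y F e f} ≤ #W := by
  refine card_le_card_of_injOn G.src (fun e he => h.src_mem (mem_filter.1 he).1) ?_
  have not_lt {e f : E} (hetop : ¬ ∃ f, G.IsNextAbove y F e f) (hf : f ∈ F)
      (hsrc : G.src f = G.src e) :
      ¬ gapHeight y (G.time (G.src e)) e < gapHeight y (G.time (G.src e)) f := fun hlt => by
    obtain ⟨g, hg, hmin⟩ := exists_min_image {g ∈ F | G.src g = G.src e ∧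
      gapHeight y (G.time (G.src e)) e < gapHeight y (G.time (G.src e)) g}
      (gapHeight y (G.time (G.src e))) ⟨f, mem_filter.2 ⟨hf, hsrc, hlt⟩⟩
    obtain ⟨hgF, hgsrc, hglt⟩ := mem_filter.1 hg
    exact hetop ⟨g, hgF, hgsrc, hglt, fun hk hksrc hklt =>
      hmin _ (mem_filter.2 ⟨hk, hksrc, hklt⟩)⟩
  intro e he f hf hsrc
  obtain ⟨heF, hetop⟩ := mem_filter.1 he
  obtain ⟨hfF, hftop⟩ := mem_filter.1 hf
  by_contra hne
  rcases (h.isDrawing.gapHeight_ne hne (active_time_src e) (hsrc ▸ active_time_src f)).lt_or_gt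
    with hlt | hlt
  · exact not_lt hetop hfF hsrc.symm hlt
  · exact not_lt hftop heF hsrc (hsrc ▸ hlt)

lemma card_le (h : G.IsPlaneSubgraph y F W) : #F ≤ 3 * #W := by
  rw [← card_filter_add_card_filter_not (s := F) fun e => ∃ f, G.IsNextAbove y F e f]
  linarith [h.card_filter_exists_isNextAbove_le, h.card_filter_not_exists_isNextAbove_le]

end IsPlaneSubgraph

end Planar
end MonotoneGraph

/-! ### Random sampling -/

section Sampling

variable {V α β : Type*} [Fintype V]

/-- The probability that a random subset of `V` which contains each element independently with
probability `p` is equal to `W`. -/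
noncomputable def sampleWeight (p : ℝ) (W : Finset V) : ℝ := p ^ #W * (1 - p) ^ #Wᶜ

lemma sampleWeight_nonneg {p : ℝ} (hp₀ : 0 ≤ p) (hp₁ : p ≤ 1) (W : Finset V) :
    0 ≤ sampleWeight p W :=
  mul_nonneg (pow_nonneg hp₀ _) (pow_nonneg (sub_nonneg.2 hp₁) _)

lemma sum_sampleWeight_ite_subset (p : ℝ) (Q : Finset V) :
    ∑ W : Finset V, (if Q ⊆ W then sampleWeight p W else 0) = p ^ #Q := by
  have hprod (W : Finset V) :
      (if Q ⊆ W then sampleWeight p W else 0) =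
        (∏ _v ∈ W, p) * ∏ v ∈ univ \ W, (if v ∈ Q then 0 else 1 - p) := by
    rw [prod_const]
    split_ifs with hQ
    · rw [sampleWeight, compl_eq_univ_sdiff, prod_congr rfl fun v hv => ?_, prod_const]
      exact if_neg fun hvQ => (mem_sdiff.1 hv).2 (hQ hvQ)
    · obtain ⟨v, hvQ, hvW⟩ := not_subset.1 hQ
      exact Eq.symm <| mul_eq_zero_of_right _ <|
        prod_eq_zero (mem_sdiff.2 ⟨mem_univ v, hvW⟩) (if_pos hvQ)
  rw [sum_congr rfl fun W _ => hprod W, ← powerset_univ, ← prod_add]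
  simp only [add_ite, add_zero, add_sub_cancel, prod_ite, prod_const, one_pow, mul_one,
    filter_mem_eq_inter, univ_inter]

lemma sum_sampleWeight_mul_card_filter_subset (p : ℝ) (A : Finset α) {Q : α → Finset V} {k : ℕ}
    (hQ : ∀ a ∈ A, #(Q a) = k) :
    ∑ W, sampleWeight p W * #{a ∈ A | Q a ⊆ W} = #A * p ^ k := by
  calc ∑ W, sampleWeight p W * #{a ∈ A | Q a ⊆ W}
      = ∑ W, ∑ a ∈ A, (if Q a ⊆ W then sampleWeight p W else 0) := by
        simp only [card_filter, Nat.cast_sum, mul_sum, Nat.cast_ite, Nat.cast_one, Nat.cast_zero,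
          mul_ite, mul_one, mul_zero]
    _ = ∑ a ∈ A, p ^ #(Q a) := by
        rw [sum_comm]
        exact sum_congr rfl fun a _ => sum_sampleWeight_ite_subset p (Q a)
    _ = #A * p ^ k := by
        rw [sum_congr rfl fun a ha => by rw [hQ a ha], sum_const, nsmul_eq_mul]

lemma sum_sampleWeight_mul_card (p : ℝ) :
    ∑ W : Finset V, sampleWeight p W * #W = Fintype.card V * p := by
  simpa using sum_sampleWeight_mul_card_filter_subset p (univ : Finset V) (Q := fun v => {v})
    (k := 1) fun _ _ => rfl

variable {A : Finset α} {B : Finset β} {Q : α → Finset V} {R : β → Finset V} {c : ℕ}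

lemma card_mul_sq_le_of_forall_card_filter_subset_le (hQ : ∀ a ∈ A, #(Q a) = 2)
    (hR : ∀ b ∈ B, #(R b) = 4)
    (h : ∀ W, #{a ∈ A | Q a ⊆ W} ≤ c * #W + #{b ∈ B | R b ⊆ W})
    {p : ℝ} (hp₀ : 0 ≤ p) (hp₁ : p ≤ 1) :
    #A * p ^ 2 ≤ c * (Fintype.card V * p) + #B * p ^ 4 := by
  rw [← sum_sampleWeight_mul_card_filter_subset p A hQ,
    ← sum_sampleWeight_mul_card_filter_subset p B hR, ← sum_sampleWeight_mul_card, mul_sum,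
    ← sum_add_distrib]
  refine sum_le_sum fun W _ => ?_
  calc sampleWeight p W * #{a ∈ A | Q a ⊆ W}
      ≤ sampleWeight p W * (c * #W + #{b ∈ B | R b ⊆ W}) := by
        gcongr
        · exact sampleWeight_nonneg hp₀ hp₁ W
        · exact_mod_cast h W
    _ = c * (sampleWeight p W * #W) + sampleWeight p W * #{b ∈ B | R b ⊆ W} := by ring

/-- The sampling probability `2 c |V| / |A|` balances the two terms of the sampled inequality. -/
lemma card_le_or_cube_le_of_forall_card_filter_subset_le (hc : 0 < c) (hQ : ∀ a ∈ A, #(Q a) = 2)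
    (hR : ∀ b ∈ B, #(R b) = 4)
    (h : ∀ W, #{a ∈ A | Q a ⊆ W} ≤ c * #W + #{b ∈ B | R b ⊆ W}) :
    #A ≤ 2 * c * Fintype.card V ∨ #A ^ 3 ≤ 8 * c ^ 2 * #B * Fintype.card V ^ 2 := by
  rw [or_iff_not_imp_left, not_le]
  intro hlarge
  obtain ⟨a, ha⟩ := card_pos.1 (Nat.zero_lt_of_lt hlarge)
  have hA : (0 : ℝ) < #A := Nat.cast_pos.2 (card_pos.2 ⟨a, ha⟩)
  have hV : (0 : ℝ) < Fintype.card V := Nat.cast_pos.2 <|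
    (by rw [hQ a ha]; exact two_pos : 0 < #(Q a)).trans_le (card_le_univ _)
  have : (0 : ℝ) < c := Nat.cast_pos.2 hc
  have hlarge' : 2 * c * Fintype.card V < (#A : ℝ) := by exact_mod_cast hlarge
  have hsample := card_mul_sq_le_of_forall_card_filter_subset_le hQ hR h
    (p := 2 * c * Fintype.card V / #A) (by positivity) ((div_le_one hA).2 hlarge'.le)
  suffices (#A : ℝ) ^ 3 ≤ 8 * c ^ 2 * #B * Fintype.card V ^ 2 by exact_mod_cast this
  generalize (Fintype.card V : ℝ) = n at *
  have hscale : 0 < 2 * c ^ 2 * n ^ 2 / (#A : ℝ) ^ 4 := by positivity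
  refine le_of_mul_le_mul_left ?_ hscale
  calc 2 * c ^ 2 * n ^ 2 / (#A : ℝ) ^ 4 * #A ^ 3
      = #A * (2 * c * n / #A) ^ 2 - c * (n * (2 * c * n / #A)) := by field_simp; ring
    _ ≤ #B * (2 * c * n / #A) ^ 4 := sub_le_iff_le_add'.2 hsample
    _ = 2 * c ^ 2 * n ^ 2 / (#A : ℝ) ^ 4 * (8 * c ^ 2 * #B * n ^ 2) := by field_simp; ring

end Sampling

/-! ### The crossing lemma -/

namespace MonotoneGraph

section CrossingLemma

variable {V E : Type*} {G : MonotoneGraph V E} {y : E → ℕ → ℝ} {e f : E} {t : ℕ}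

/-- The set of the two endpoints of an edge. -/
noncomputable def endpoints (G : MonotoneGraph V E) (e : E) : Finset V := {G.src e, G.tgt e}

lemma src_mem_endpoints (e : E) : G.src e ∈ G.endpoints e := mem_insert_self _ _

lemma tgt_mem_endpoints (e : E) : G.tgt e ∈ G.endpoints e :=
  mem_insert_of_mem (mem_singleton_self _)

lemma src_ne_tgt_of_active (he : G.Active e t) (hf : G.Active f t) : G.src e ≠ G.tgt f :=
  fun h => (he.1.trans_lt hf.2).ne (congrArg G.time h)

lemma card_endpoints (e : E) : #(G.endpoints e) = 2 :=
  card_pair (src_ne_tgt_of_active (active_time_src e) (active_time_src e))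

lemma card_endpoints_union (he : G.Active e t) (hf : G.Active f t) (hsrc : G.src e ≠ G.src f)
    (htgt : G.tgt e ≠ G.tgt f) : #(G.endpoints e ∪ G.endpoints f) = 4 := by
  rw [card_union_of_disjoint, card_endpoints, card_endpoints]
  simp [endpoints, hsrc.symm, htgt.symm, src_ne_tgt_of_active hf he,
    (src_ne_tgt_of_active he hf).symm]

variable [Fintype E]

/-- Deleting one edge of every crossing leaves a plane graph. -/
lemma IsDrawing.card_filter_endpoints_subset_le (hy : G.IsDrawing y)
    (hsimple : ∀ e f, G.src e = G.src f → G.tgt e = G.tgt f → e = f) (W : Finset V) :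
    #{e | G.endpoints e ⊆ W} ≤ 3 * #W +
      #{x ∈ G.allCrossings y | G.endpoints x.2.1 ∪ G.endpoints x.2.2 ⊆ W} := by
  set X := {x ∈ G.allCrossings y | G.endpoints x.2.1 ∪ G.endpoints x.2.2 ⊆ W}
  set F := ({e | G.endpoints e ⊆ W} : Finset E) \ X.image (·.2.1) with hF
  have subset_of_mem {e : E} (he : e ∈ F) : G.endpoints e ⊆ W :=
    (mem_filter.1 (mem_sdiff.1 he).1).2
  have hplane : G.IsPlaneSubgraph y F W :=
    { isDrawing := hy
      src_mem := fun he => subset_of_mem he (src_mem_endpoints _)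
      tgt_mem := fun he => subset_of_mem he (tgt_mem_endpoints _)
      simple := fun _ _ => hsimple _ _
      notMem_crossings := fun {e f t} he hf hef => (mem_sdiff.1 he).2 <| mem_image.2
        ⟨⟨t, e, f⟩, mem_filter.2 ⟨mem_allCrossings.2 hef,
          union_subset (subset_of_mem he) (subset_of_mem hf)⟩, rfl⟩ }
  calc #{e | G.endpoints e ⊆ W} ≤ #F + #(X.image (·.2.1)) := by
        rw [hF]; exact card_le_card_sdiff_add_card
    _ ≤ 3 * #W + #X := add_le_add hplane.card_le card_image_le

theorem IsDrawing.card_le_or_cube_le [Fintype V] (hy : G.IsDrawing y)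
    (hsimple : ∀ e f, G.src e = G.src f → G.tgt e = G.tgt f → e = f) :
    Fintype.card E ≤ 6 * Fintype.card V ∨
      Fintype.card E ^ 3 ≤ 72 * #(G.allCrossings y) * Fintype.card V ^ 2 := by
  obtain ⟨z, hz, hle, hadj⟩ := hy.exists_forall_crossings_not_adjacent
  have hquad (x : Σ _ : ℕ, E × E) (hx : x ∈ G.allCrossings z) :
      #(G.endpoints x.2.1 ∪ G.endpoints x.2.2) = 4 := by
    have hmem := mem_allCrossings.1 hx
    obtain ⟨⟨⟨he, -⟩, hf, -⟩, -⟩ := mem_crossings.1 hmem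
    exact card_endpoints_union he hf (hadj _ _ _ hmem).1 (hadj _ _ _ hmem).2
  refine (card_le_or_cube_le_of_forall_card_filter_subset_le three_pos
    (fun e _ => card_endpoints e) hquad (hz.card_filter_endpoints_subset_le hsimple)).imp
    id fun h => h.trans ?_
  gcongr
  norm_num

end CrossingLemma
end MonotoneGraph

/-! ### Consecutive points and sweeps -/

section ConsecutivePairs

variable {α β : Type*} [LinearOrder β] {f : α → β} {S : Finset α} {x x' : α × α} {b : β}

/-- The pairs of elements of `S` which follow each other when `S` is sorted by the values of `f`. -/
noncomputable def consecutivePairs (f : α → β) (S : Finset α) : Finset (α × α) :=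
  {x ∈ S ×ˢ S | f x.1 < f x.2 ∧ ∀ a ∈ S, ¬ (f x.1 < f a ∧ f a < f x.2)}

lemma mem_consecutivePairs : x ∈ consecutivePairs f S ↔
    (x.1 ∈ S ∧ x.2 ∈ S) ∧ f x.1 < f x.2 ∧ ∀ a ∈ S, ¬ (f x.1 < f a ∧ f a < f x.2) := by
  simp only [consecutivePairs, mem_filter, mem_product]

lemma card_le_card_consecutivePairs_add_one (hf : Set.InjOn f S) :
    #S ≤ #(consecutivePairs f S) + 1 := by
  rcases S.eq_empty_or_nonempty with rfl | hS
  · simp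
  obtain ⟨m, hm, hmax⟩ := exists_max_image S f hS
  rw [← card_erase_add_one hm]
  gcongr
  refine (card_le_card fun a ha => ?_).trans (card_image_le (f := Prod.fst))
  obtain ⟨ham, haS⟩ := mem_erase.1 ha
  have hlt : f a < f m := (hmax a haS).lt_of_ne (hf.ne haS hm ham)
  obtain ⟨b, hb, hmin⟩ := exists_min_image {b ∈ S | f a < f b} f ⟨m, mem_filter.2 ⟨hm, hlt⟩⟩
  obtain ⟨hbS, hab⟩ := mem_filter.1 hb
  exact mem_image.2 ⟨(a, b), mem_consecutivePairs.2 ⟨⟨haS, hbS⟩, hab, fun d hd hd' =>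
    (hmin d (mem_filter.2 ⟨hd, hd'.1⟩)).not_gt hd'.2⟩, rfl⟩

lemma eq_of_mem_consecutivePairs (hf : Set.InjOn f S) (hx : x ∈ consecutivePairs f S)
    (hx' : x' ∈ consecutivePairs f S) (hb : b ∈ Set.Ico (f x.1) (f x.2))
    (hb' : b ∈ Set.Ico (f x'.1) (f x'.2)) : x = x' := by
  obtain ⟨⟨h₁, h₂⟩, -, h⟩ := mem_consecutivePairs.1 hx
  obtain ⟨⟨h₁', h₂'⟩, -, h'⟩ := mem_consecutivePairs.1 hx'
  have hlt : f x.1 < f x'.2 := hb.1.trans_lt hb'.2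
  have hlt' : f x'.1 < f x.2 := hb'.1.trans_lt hb.2
  refine Prod.ext (hf h₁ h₁' (le_antisymm ?_ ?_)) (hf h₂ h₂' (le_antisymm ?_ ?_))
  · exact not_lt.1 fun hc => h' _ h₁ ⟨hc, hlt⟩
  · exact not_lt.1 fun hc => h _ h₁' ⟨hc, hlt'⟩
  · exact not_lt.1 fun hc => h _ h₂' ⟨hlt, hc⟩
  · exact not_lt.1 fun hc => h' _ h₂ ⟨hlt', hc⟩

end ConsecutivePairs

section SweepTimes

/-- An increasing sequence of real numbers which contains all elements of `K`, but no two of them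
next to each other. -/
structure SweepTimes (K : Set ℝ) where
  seq : ℕ → ℝ
  strictMono : StrictMono seq
  index : ℝ → ℕ
  seq_index : ∀ {x}, x ∈ K → seq (index x) = x
  even_index : ∀ {x}, x ∈ K → Even (index x)

namespace SweepTimes

variable {K : Set ℝ} (T : SweepTimes K) {x : ℝ} {t : ℕ}

lemma index_le_iff (hx : x ∈ K) : T.index x ≤ t ↔ x ≤ T.seq t := by
  rw [← T.strictMono.le_iff_le, T.seq_index hx]

lemma lt_index_iff (hx : x ∈ K) : t < T.index x ↔ T.seq t < x := by
  rw [← T.strictMono.lt_iff_lt, T.seq_index hx]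

lemma even_of_seq_mem (ht : T.seq t ∈ K) : Even t :=
  T.strictMono.injective (T.seq_index ht) ▸ T.even_index ht

lemma notMem_of_mem_Ioo (hx : x ∈ Set.Ioo (T.seq t) (T.seq (t + 1))) : x ∉ K := fun hxK => by
  have h₁ := (T.lt_index_iff hxK).2 hx.1
  have h₃ := T.strictMono.lt_iff_lt.1 ((T.seq_index hxK).trans_lt hx.2)
  lia

lemma exists_strictMono_superset (K : Finset ℝ) :
    ∃ c : ℕ → ℝ, StrictMono c ∧ ∀ x ∈ K, ∃ n, c n = x := by
  obtain ⟨b, hb⟩ := K.bddAbove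
  refine ⟨fun n => if h : n < #K then K.orderEmbOfFin rfl ⟨n, h⟩ else b + 1 + n,
    strictMono_nat_of_lt_succ fun n => ?_, fun x hx => ?_⟩
  · split_ifs with h h' h'
    · exact (K.orderEmbOfFin rfl).strictMono (Nat.lt_succ_self n)
    · have := hb (K.orderEmbOfFin_mem rfl ⟨n, h⟩)
      push_cast
      linarith [n.cast_nonneg (α := ℝ)]
    · lia
    · push_cast
      linarith
  · obtain ⟨⟨n, hn⟩, hnx⟩ : x ∈ Set.range (K.orderEmbOfFin rfl) := by
      rwa [range_orderEmbOfFin]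
    exact ⟨n, (dif_pos hn).trans hnx⟩

lemma nonempty_of_finite (hK : K.Finite) : Nonempty (SweepTimes K) := by
  obtain ⟨c, hc, hcK⟩ := exists_strictMono_superset hK.toFinset
  choose! n hn using hcK
  refine ⟨{
    seq := fun t => (c (t / 2) + c ((t + 1) / 2)) / 2
    strictMono := strictMono_nat_of_lt_succ fun t => ?_
    index := fun x => 2 * n x
    seq_index := fun {x} hx => ?_
    even_index := fun _ => even_two_mul _ }⟩
  · have := hc (show t / 2 < (t + 1 + 1) / 2 by lia)
    linarith
  · rw [show (2 * n x) / 2 = n x by lia, show (2 * n x + 1) / 2 = n x by lia,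
      hn x (hK.mem_toFinset.2 hx), add_self_div_two]

end SweepTimes
end SweepTimes

/-! ### Families of monotone arcs -/

/-- A piece of a plane curve which is the graph of a continuous function over an interval. -/
structure MonotoneArc where
  domain : Set ℝ
  ordConnected : domain.OrdConnected
  height : ℝ → ℝ
  continuousOn : ContinuousOn height domain

namespace MonotoneArc

/-- The points on an arc. -/
def graph (α : MonotoneArc) : Set (ℝ × ℝ) := α.domain.graphOn α.height

lemma mem_graph {α : MonotoneArc} {p : ℝ × ℝ} :
    p ∈ α.graph ↔ p.1 ∈ α.domain ∧ α.height p.1 = p.2 := Set.mem_graphOn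

/-- The points of `P` on an arc. -/
noncomputable def pointsOn (α : MonotoneArc) (P : Finset (ℝ × ℝ)) : Finset (ℝ × ℝ) :=
  {p ∈ P | p ∈ α.graph}

lemma mem_pointsOn {α : MonotoneArc} {P : Finset (ℝ × ℝ)} {p : ℝ × ℝ} :
    p ∈ α.pointsOn P ↔ p ∈ P ∧ p ∈ α.graph := mem_filter

lemma injOn_fst_pointsOn (α : MonotoneArc) (P : Finset (ℝ × ℝ)) :
    Set.InjOn Prod.fst (α.pointsOn P : Set (ℝ × ℝ)) := fun p hp q hq h =>
  Prod.ext h <| by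
    rw [← (mem_graph.1 (mem_pointsOn.1 hp).2).2, ← (mem_graph.1 (mem_pointsOn.1 hq).2).2, h]

end MonotoneArc

section ArcFamily

variable {ι : Type*} {α : ι → MonotoneArc} {P : Finset (ℝ × ℝ)}

/-- The abscissae of the points of `P` and of the common points of two of the arcs. -/
def criticalAbscissae (α : ι → MonotoneArc) (P : Finset (ℝ × ℝ)) : Set ℝ :=
  Prod.fst '' (P ∪ ⋃ i, ⋃ j, ⋃ _ : i ≠ j, (α i).graph ∩ (α j).graph)

lemma fst_mem_criticalAbscissae {p : ℝ × ℝ} (hp : p ∈ P) : p.1 ∈ criticalAbscissae α P :=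
  ⟨p, .inl hp, rfl⟩

lemma mem_criticalAbscissae_of_height_eq {i j : ι} {x : ℝ} (hij : i ≠ j) (hi : x ∈ (α i).domain)
    (hj : x ∈ (α j).domain) (h : (α i).height x = (α j).height x) : x ∈ criticalAbscissae α P :=
  ⟨(x, (α i).height x), .inr <| Set.mem_iUnion₂.2 ⟨i, j, Set.mem_iUnion.2
    ⟨hij, MonotoneArc.mem_graph.2 ⟨hi, rfl⟩, MonotoneArc.mem_graph.2 ⟨hj, h.symm⟩⟩⟩, rfl⟩

lemma finite_criticalAbscissae [Finite ι] (h : ∀ i j, i ≠ j → ((α i).graph ∩ (α j).graph).Finite) :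
    (criticalAbscissae α P).Finite :=
  (P.finite_toSet.union <| Set.finite_iUnion fun i => Set.finite_iUnion fun j =>
    Set.finite_iUnion fun hij => h i j hij).image _

variable [Fintype ι]

/-- The pairs of points of `P` which follow each other on some arc. Pairs that do so on several
arcs are listed only once, so that they can serve as the edges of a simple graph. -/
noncomputable def arcEdges (α : ι → MonotoneArc) (P : Finset (ℝ × ℝ)) :
    Finset ((ℝ × ℝ) × (ℝ × ℝ)) :=
  univ.biUnion fun i => consecutivePairs Prod.fst ((α i).pointsOn P)

lemma exists_mem_consecutivePairs (e : arcEdges α P) :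
    ∃ i, e.1 ∈ consecutivePairs Prod.fst ((α i).pointsOn P) := by
  obtain ⟨i, -, hi⟩ := mem_biUnion.1 e.2
  exact ⟨i, hi⟩

/-- An arc along which an edge is drawn. -/
noncomputable def arcOf (e : arcEdges α P) : ι := (exists_mem_consecutivePairs e).choose

lemma mem_consecutivePairs_arcOf (e : arcEdges α P) :
    e.1 ∈ consecutivePairs Prod.fst ((α (arcOf e)).pointsOn P) :=
  (exists_mem_consecutivePairs e).choose_spec

lemma fst_mem_pointsOn_arcOf (e : arcEdges α P) : e.1.1 ∈ (α (arcOf e)).pointsOn P :=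
  (mem_consecutivePairs.1 (mem_consecutivePairs_arcOf e)).1.1

lemma snd_mem_pointsOn_arcOf (e : arcEdges α P) : e.1.2 ∈ (α (arcOf e)).pointsOn P :=
  (mem_consecutivePairs.1 (mem_consecutivePairs_arcOf e)).1.2

lemma Icc_subset_domain_arcOf (e : arcEdges α P) :
    Set.Icc e.1.1.1 e.1.2.1 ⊆ (α (arcOf e)).domain :=
  (α (arcOf e)).ordConnected.out
    (MonotoneArc.mem_graph.1 (MonotoneArc.mem_pointsOn.1 (fst_mem_pointsOn_arcOf e)).2).1
    (MonotoneArc.mem_graph.1 (MonotoneArc.mem_pointsOn.1 (snd_mem_pointsOn_arcOf e)).2).1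

lemma height_arcOf_eq_iff {e : arcEdges α P} {p : ℝ × ℝ} (hp : p ∈ P)
    (h : p.1 ∈ Set.Icc e.1.1.1 e.1.2.1) :
    (α (arcOf e)).height p.1 = p.2 ↔ p = e.1.1 ∨ p = e.1.2 := by
  have hsrc := fst_mem_pointsOn_arcOf e
  have htgt := snd_mem_pointsOn_arcOf e
  refine ⟨fun hpe => ?_, ?_⟩
  · have hpon : p ∈ (α (arcOf e)).pointsOn P := MonotoneArc.mem_pointsOn.2
      ⟨hp, MonotoneArc.mem_graph.2 ⟨Icc_subset_domain_arcOf e h, hpe⟩⟩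
    have hinj := (α (arcOf e)).injOn_fst_pointsOn P
    have hbetween := (mem_consecutivePairs.1 (mem_consecutivePairs_arcOf e)).2.2 p hpon
    rw [not_and_or, not_lt, not_lt] at hbetween
    exact hbetween.imp (fun h' => hinj hpon hsrc (h'.antisymm h.1))
      fun h' => hinj hpon htgt (h.2.antisymm h')
  · rintro (rfl | rfl)
    · exact (MonotoneArc.mem_graph.1 (MonotoneArc.mem_pointsOn.1 hsrc).2).2
    · exact (MonotoneArc.mem_graph.1 (MonotoneArc.mem_pointsOn.1 htgt).2).2

lemma sum_card_pointsOn_le {m : ℕ}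
    (hm : ∀ p ∈ P, ∀ q ∈ P, p ≠ q → #{i | p ∈ (α i).graph ∧ q ∈ (α i).graph} ≤ m) :
    ∑ i, #((α i).pointsOn P) ≤ Fintype.card ι + m * #(arcEdges α P) := by
  have hmult (e) (he : e ∈ arcEdges α P) :
      #{i | e ∈ consecutivePairs Prod.fst ((α i).pointsOn P)} ≤ m := by
    obtain ⟨i, -, hi⟩ := mem_biUnion.1 he
    obtain ⟨⟨hp, hq⟩, hlt, -⟩ := mem_consecutivePairs.1 hi
    refine (card_le_card <| monotone_filter_right _ fun j _ hj => ?_).trans <|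
      hm e.1 (MonotoneArc.mem_pointsOn.1 hp).1 e.2 (MonotoneArc.mem_pointsOn.1 hq).1
        (ne_of_apply_ne Prod.fst hlt.ne)
    obtain ⟨hp', hq'⟩ := (mem_consecutivePairs.1 hj).1
    exact ⟨(MonotoneArc.mem_pointsOn.1 hp').2, (MonotoneArc.mem_pointsOn.1 hq').2⟩
  calc ∑ i, #((α i).pointsOn P)
      ≤ ∑ i, (#(consecutivePairs Prod.fst ((α i).pointsOn P)) + 1) :=
        sum_le_sum fun i _ => card_le_card_consecutivePairs_add_one ((α i).injOn_fst_pointsOn P)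
    _ = Fintype.card ι +
        ∑ i, #{e ∈ arcEdges α P | e ∈ consecutivePairs Prod.fst ((α i).pointsOn P)} := by
        rw [sum_add_distrib, add_comm, Fintype.card_eq_sum_ones]
        congr! with i
        rw [filter_mem_eq_inter, arcEdges,
          inter_eq_right.2 (subset_biUnion_of_mem
            (fun i => consecutivePairs Prod.fst ((α i).pointsOn P)) (mem_univ i))]
    _ = Fintype.card ι + ∑ e ∈ arcEdges α P,
        #{i | e ∈ consecutivePairs Prod.fst ((α i).pointsOn P)} := by
        congr 1
        exact sum_card_bipartiteAbove_eq_sum_card_bipartiteBelow _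
    _ ≤ Fintype.card ι + m * #(arcEdges α P) := by
        rw [mul_comm, ← smul_eq_mul]
        gcongr
        exact sum_le_card_nsmul _ _ _ hmult

section Drawing

variable (T : SweepTimes (criticalAbscissae α P)) {e f : arcEdges α P} {t : ℕ}

/-- The graph on the points of `P` formed by the pairs which follow each other on some arc. -/
noncomputable def arcGraph (T : SweepTimes (criticalAbscissae α P)) :
    MonotoneGraph P (arcEdges α P) where
  time v := T.index v.1.1
  height v := v.1.2
  src e := ⟨e.1.1, (MonotoneArc.mem_pointsOn.1 (fst_mem_pointsOn_arcOf e)).1⟩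
  tgt e := ⟨e.1.2, (MonotoneArc.mem_pointsOn.1 (snd_mem_pointsOn_arcOf e)).1⟩
  time_src_lt e := by
    rw [T.lt_index_iff, T.seq_index]
    · exact (mem_consecutivePairs.1 (mem_consecutivePairs_arcOf e)).2.1
    all_goals exact fst_mem_criticalAbscissae (Subtype.prop _)

/-- The heights of the edges of `arcGraph T` at the times of the sweep. -/
noncomputable def arcHeights (T : SweepTimes (criticalAbscissae α P)) (e : arcEdges α P) (t : ℕ) :
    ℝ :=
  (α (arcOf e)).height (T.seq t)

variable {T}

lemma time_src_le_iff : (arcGraph T).time ((arcGraph T).src e) ≤ t ↔ e.1.1.1 ≤ T.seq t :=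
  T.index_le_iff (fst_mem_criticalAbscissae ((arcGraph T).src e).2)

lemma lt_time_tgt_iff : t < (arcGraph T).time ((arcGraph T).tgt e) ↔ T.seq t < e.1.2.1 :=
  T.lt_index_iff (fst_mem_criticalAbscissae ((arcGraph T).tgt e).2)

lemma le_time_tgt_iff : t ≤ (arcGraph T).time ((arcGraph T).tgt e) ↔ T.seq t ≤ e.1.2.1 := by
  rw [← T.strictMono.le_iff_le]
  exact iff_of_eq <| congrArg (T.seq t ≤ ·) <|
    T.seq_index (fst_mem_criticalAbscissae ((arcGraph T).tgt e).2)

lemma active_arcGraph_iff :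
    (arcGraph T).Active e t ↔ T.seq t ∈ Set.Ico e.1.1.1 e.1.2.1 :=
  and_congr time_src_le_iff lt_time_tgt_iff

lemma Icc_seq_subset_domain (he : (arcGraph T).Active e t) :
    Set.Icc (T.seq t) (T.seq (t + 1)) ⊆ (α (arcOf e)).domain :=
  (Set.Icc_subset_Icc (time_src_le_iff.1 he.1) (le_time_tgt_iff.1 he.2)).trans
    (Icc_subset_domain_arcOf e)

lemma seq_mem_domain (he : (arcGraph T).Active e t) : T.seq t ∈ (α (arcOf e)).domain :=
  Icc_seq_subset_domain he (Set.left_mem_Icc.2 (T.strictMono (Nat.lt_succ_self t)).le)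

lemma seq_succ_mem_domain (he : (arcGraph T).Active e t) :
    T.seq (t + 1) ∈ (α (arcOf e)).domain :=
  Icc_seq_subset_domain he (Set.right_mem_Icc.2 (T.strictMono (Nat.lt_succ_self t)).le)

lemma eq_of_active_of_arcOf_eq (he : (arcGraph T).Active e t) (hf : (arcGraph T).Active f t)
    (h : arcOf e = arcOf f) : e = f :=
  Subtype.ext <| eq_of_mem_consecutivePairs ((α (arcOf e)).injOn_fst_pointsOn P)
    (mem_consecutivePairs_arcOf e) (h ▸ mem_consecutivePairs_arcOf f)
    (active_arcGraph_iff.1 he) (active_arcGraph_iff.1 hf)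

lemma arcHeights_succ_le_succ (he : (arcGraph T).Active e t) (hf : (arcGraph T).Active f t)
    (h : arcHeights T e t < arcHeights T f t) :
    arcHeights T e (t + 1) ≤ arcHeights T f (t + 1) := by
  by_contra! h'
  have hcont : ContinuousOn ((α (arcOf f)).height - (α (arcOf e)).height)
      (Set.Icc (T.seq t) (T.seq (t + 1))) :=
    ((α _).continuousOn.mono (Icc_seq_subset_domain hf)).sub
      ((α _).continuousOn.mono (Icc_seq_subset_domain he))
  obtain ⟨x, hx, hx₀⟩ := intermediate_value_Ioo' (T.strictMono (Nat.lt_succ_self t)).le hcont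
    ⟨sub_neg.2 h', sub_pos.2 h⟩
  have hx' := Set.Ioo_subset_Icc_self hx
  refine T.notMem_of_mem_Ioo hx <| mem_criticalAbscissae_of_height_eq (fun harc => ?_)
    (Icc_seq_subset_domain hf hx') (Icc_seq_subset_domain he hx') (sub_eq_zero.1 hx₀)
  exact h.ne (congrArg (arcHeights T · t) (eq_of_active_of_arcOf_eq hf he harc)).symm

lemma isDrawing_arcHeights : (arcGraph T).IsDrawing (arcHeights T) where
  eq_height_iff {e v} hsrc htgt := by
    have hseq : T.seq ((arcGraph T).time v) = v.1.1 :=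
      T.seq_index (fst_mem_criticalAbscissae v.2)
    rw [time_src_le_iff, hseq] at hsrc
    rw [le_time_tgt_iff, hseq] at htgt
    rw [arcHeights, hseq, Subtype.ext_iff, Subtype.ext_iff]
    exact height_arcOf_eq_iff v.2 ⟨hsrc, htgt⟩
  succ_le_succ := arcHeights_succ_le_succ
  succ_ne_succ {e f t} hne he hf h h' := by
    have harc := fun harc => hne (eq_of_active_of_arcOf_eq he hf harc)
    exact Nat.even_add_one.1
      (T.even_of_seq_mem <| mem_criticalAbscissae_of_height_eq harc (seq_succ_mem_domain he)
        (seq_succ_mem_domain hf) h')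
      (T.even_of_seq_mem <| mem_criticalAbscissae_of_height_eq harc (seq_mem_domain he)
        (seq_mem_domain hf) h)

lemma arcOf_ne_of_mem_crossings (h : (e, f) ∈ (arcGraph T).crossings (arcHeights T) t) :
    arcOf e ≠ arcOf f := fun harc => by
  obtain ⟨⟨⟨he, -⟩, hf, -⟩, hlt, -⟩ := MonotoneGraph.mem_crossings.1 h
  rw [eq_of_active_of_arcOf_eq he hf harc] at hlt
  exact hlt.false

lemma mem_graph_inter_graph_of_mem_crossings
    (h : (e, f) ∈ (arcGraph T).crossings (arcHeights T) t) :
    (T.seq (t + 1), arcHeights T e (t + 1)) ∈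
      (α (arcOf e)).graph ∩ (α (arcOf f)).graph := by
  obtain ⟨⟨⟨he, -⟩, hf, -⟩, -⟩ := MonotoneGraph.mem_crossings.1 h
  exact ⟨MonotoneArc.mem_graph.2 ⟨seq_succ_mem_domain he, rfl⟩, MonotoneArc.mem_graph.2
    ⟨seq_succ_mem_domain hf, (isDrawing_arcHeights.succ_eq_succ_of_mem_crossings h).symm⟩⟩

/-- A crossing is determined by the two arcs involved and by its position on them. -/
lemma card_allCrossings_arcHeights_le {M : ℕ}
    (h : ∀ i j, i ≠ j → ((α i).graph ∩ (α j).graph).Finite ∧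
      ((α i).graph ∩ (α j).graph).ncard ≤ M) :
    #((arcGraph T).allCrossings (arcHeights T)) ≤ M * Fintype.card ι ^ 2 := by
  let arcs (x : Σ _ : ℕ, arcEdges α P × arcEdges α P) : ι × ι := (arcOf x.2.1, arcOf x.2.2)
  refine (card_le_mul_card_image (f := arcs) _ M fun ij hij => ?_).trans <|
    Nat.mul_le_mul_left M <| (card_le_univ _).trans_eq (by rw [Fintype.card_prod, sq])
  have hcross {x} (hx : x ∈ ({x ∈ (arcGraph T).allCrossings (arcHeights T) | arcs x = ij} :
      Finset _)) : x.2 ∈ (arcGraph T).crossings (arcHeights T) x.1 ∧ arcs x = ij :=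
    (mem_filter.1 hx).imp_left MonotoneGraph.mem_allCrossings.1
  have hne : ij.1 ≠ ij.2 := by
    obtain ⟨x, hx, rfl⟩ := mem_image.1 hij
    exact arcOf_ne_of_mem_crossings (MonotoneGraph.mem_allCrossings.1 hx)
  obtain ⟨hfin, hcard⟩ := h _ _ hne
  rw [← Set.ncard_coe_finset]
  refine (Set.ncard_le_ncard_of_injOn (fun x => (T.seq (x.1 + 1), arcHeights T x.2.1 (x.1 + 1)))
    (fun x hx => ?_) (fun x hx x' hx' hxx' => ?_) hfin).trans hcard
  · obtain ⟨hmem, rfl⟩ := hcross hx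
    exact mem_graph_inter_graph_of_mem_crossings hmem
  · obtain ⟨hx, hxij⟩ := hcross hx
    obtain ⟨hx', hxij'⟩ := hcross hx'
    obtain ⟨t, e, f⟩ := x
    obtain ⟨t', e', f'⟩ := x'
    obtain rfl : t = t' := Nat.succ_injective (T.strictMono.injective (Prod.ext_iff.1 hxx').1)
    obtain ⟨hee', hff'⟩ := Prod.ext_iff.1 (hxij.trans hxij'.symm)
    obtain ⟨⟨⟨he, -⟩, hf, -⟩, -⟩ := MonotoneGraph.mem_crossings.1 hx
    obtain ⟨⟨⟨he', -⟩, hf', -⟩, -⟩ := MonotoneGraph.mem_crossings.1 hx'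
    rw [eq_of_active_of_arcOf_eq he he' hee', eq_of_active_of_arcOf_eq hf hf' hff']

end Drawing

lemma card_arcEdges_le_or_cube_le {M : ℕ}
    (h : ∀ i j, i ≠ j → ((α i).graph ∩ (α j).graph).Finite ∧
      ((α i).graph ∩ (α j).graph).ncard ≤ M) :
    #(arcEdges α P) ≤ 6 * #P ∨
      #(arcEdges α P) ^ 3 ≤ 72 * (M * Fintype.card ι ^ 2) * #P ^ 2 := by
  obtain ⟨T⟩ := SweepTimes.nonempty_of_finite
    (finite_criticalAbscissae (P := P) fun i j hij => (h i j hij).1)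
  have hsimple (e f : arcEdges α P) (hsrc : (arcGraph T).src e = (arcGraph T).src f)
      (htgt : (arcGraph T).tgt e = (arcGraph T).tgt f) : e = f :=
    Subtype.ext <| Prod.ext (Subtype.ext_iff.1 hsrc) (Subtype.ext_iff.1 htgt)
  have hcrossing := (isDrawing_arcHeights (T := T)).card_le_or_cube_le hsimple
  rw [Fintype.card_coe, Fintype.card_coe] at hcrossing
  refine hcrossing.imp_right fun hle => hle.trans ?_
  gcongr
  exact card_allCrossings_arcHeights_le h

end ArcFamily

/-! ### Cutting a zero set into arcs -/

open scoped Topology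

section Sections

variable {F : ℝ × ℝ → ℝ} {I : Set ℝ}

/-- The projection of the strip over `I` to the first coordinate, augmented by the value of `F`.
The part of the zero set of `F` over `I` is the preimage of `{0} × I`. -/
def fiberMap (F : ℝ × ℝ → ℝ) (I : Set ℝ) (p : I × ℝ) : ℝ × I := (F (p.1, p.2), p.1)

lemma isLocalHomeomorphOn_prodMk_fst (hF : ContDiff ℝ 1 F) :
    IsLocalHomeomorphOn (fun p : ℝ × ℝ => (F p, p.1))
      {p | deriv (fun y => F (p.1, y)) p.2 ≠ 0} := by
  intro p hp
  have hstrict : HasStrictFDerivAt F (fderiv ℝ F p) p := hF.contDiffAt.hasStrictFDerivAt one_ne_zero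
  have hderiv : HasDerivAt (fun y => F (p.1, y)) (fderiv ℝ F p (0, 1)) p.2 :=
    hstrict.hasFDerivAt.comp_hasDerivAt p.2 ((hasDerivAt_const p.2 p.1).prodMk (hasDerivAt_id p.2))
  have hne : fderiv ℝ F p (0, 1) ≠ 0 := hderiv.deriv ▸ hp
  have hinv : (fderiv ℝ F p ∘L .inr ℝ ℝ ℝ).IsInvertible :=
    ⟨ContinuousLinearEquiv.unitsEquivAut ℝ (Units.mk0 _ hne), by ext; simp⟩
  exact ⟨(hstrict.implicitFunctionDataOfProdDomain hinv).toOpenPartialHomeomorph,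
    ImplicitFunctionData.pt_mem_toOpenPartialHomeomorph_source _, rfl⟩

lemma isLocalHomeomorphOn_fiberMap (hF : ContDiff ℝ 1 F) (hI : IsOpen I) :
    IsLocalHomeomorphOn (fiberMap F I) {p | deriv (fun y => F (p.1, y)) p.2 ≠ 0} := by
  have hdom : IsLocalHomeomorph (Prod.map Subtype.val id : I × ℝ → ℝ × ℝ) :=
    (hI.isOpenEmbedding_subtypeVal.prodMap .id).isLocalHomeomorph
  have hcod : IsLocalHomeomorph (Prod.map id Subtype.val : ℝ × I → ℝ × ℝ) :=
    (Topology.IsOpenEmbedding.id.prodMap hI.isOpenEmbedding_subtypeVal).isLocalHomeomorph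
  have hcomp : IsLocalHomeomorphOn ((fun p : ℝ × ℝ => (F p, p.1)) ∘ Prod.map Subtype.val id)
      {p : I × ℝ | deriv (fun y => F (p.1, y)) p.2 ≠ 0} :=
    (isLocalHomeomorphOn_prodMk_fst hF).comp hdom.isLocalHomeomorphOn fun p hp => hp
  refine IsLocalHomeomorphOn.of_comp_left (g := Prod.map id Subtype.val) hcomp
    hcod.isLocalHomeomorphOn fun p _ => Continuous.continuousAt ?_
  have := hF.continuous
  unfold fiberMap
  fun_prop

lemma existsUnique_section (hF : ContDiff ℝ 1 F) (hI : IsOpen I) (hI' : I.OrdConnected)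
    (hclosed : IsClosedMap (fiberMap F I)) (hfin : ∀ x ∈ I, {y | F (x, y) = 0}.Finite)
    (hsimple : ∀ x ∈ I, ∀ y, F (x, y) = 0 → deriv (fun y => F (x, y)) y ≠ 0)
    (x₀ : I) {y₀ : ℝ} (h₀ : F (x₀, y₀) = 0) :
    ∃! g : C(I, ℝ), g x₀ = y₀ ∧ ∀ x : I, F (x, g x) = 0 := by
  have hcover : IsCoveringMapOn (fiberMap F I) {p | p.1 = 0} := by
    refine hclosed.isCoveringMapOn_of_isLocalHomeomorphOn ?_
      ((isLocalHomeomorphOn_fiberMap hF hI).mono fun p hp => hsimple _ p.1.2 _ hp)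
    rintro ⟨_, x⟩ rfl
    refine ((hfin x x.2).image (Prod.mk x)).subset fun p hp => ?_
    obtain ⟨hzero, rfl⟩ := Prod.ext_iff.1 hp
    exact ⟨p.2, hzero, rfl⟩
  have : ContractibleSpace I := (hI'.convex.starConvex x₀.2).contractibleSpace ⟨x₀, x₀.2⟩
  have : LocallyPathConnectedSpace I := hI.locallyPathConnectedSpace
  obtain ⟨G, ⟨hG₀, hG⟩, huniq⟩ := hcover.existsUnique_continuousMap_lifts
    (⟨fun x => (0, x), by fun_prop⟩ : C(I, ℝ × I)) (a₀ := x₀) (e₀ := (x₀, y₀))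
    (Prod.ext h₀ rfl) fun _ => rfl
  have hG' (x : I) : F (x, (G x).2) = 0 := by
    obtain ⟨hzero, hfst⟩ : F ((G x).1, (G x).2) = 0 ∧ (G x).1 = x := Prod.ext_iff.1 (congrFun hG x)
    rwa [hfst] at hzero
  refine ⟨⟨fun x => (G x).2, by fun_prop⟩, ⟨congrArg Prod.snd hG₀, hG'⟩, ?_⟩
  rintro g ⟨hg₀, hg⟩
  have := huniq ⟨fun x => (x, g x), by fun_prop⟩
    ⟨Prod.ext rfl hg₀, funext fun x => Prod.ext (hg x) rfl⟩
  ext x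
  exact congrArg (fun G : C(I, I × ℝ) => (G x).2) this

/-- The graph of a continuous function on an interval, as an arc. -/
noncomputable def MonotoneArc.ofSection (hI : I.OrdConnected) (g : C(I, ℝ)) : MonotoneArc where
  domain := I
  ordConnected := hI
  height := Function.extend Subtype.val g 0
  continuousOn := continuousOn_iff_continuous_domRestrict.2 <|
    g.continuous.congr fun x => (Subtype.val_injective.extend_apply g 0 x).symm

lemma MonotoneArc.mem_graph_ofSection {hI : I.OrdConnected} {g : C(I, ℝ)} {p : ℝ × ℝ} :
    p ∈ (ofSection hI g).graph ↔ ∃ h : p.1 ∈ I, g ⟨p.1, h⟩ = p.2 := by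
  rw [mem_graph, ← exists_prop]
  exact exists_congr fun h => by
    rw [← Subtype.val_injective.extend_apply g 0 ⟨p.1, h⟩]; rfl

/-- The set `S` is the union of at most `n` pairwise disjoint arcs. -/
def HasArcDecomposition (S : Set (ℝ × ℝ)) (n : ℕ) : Prop :=
  ∃ A : Finset MonotoneArc, #A ≤ n ∧ (A : Set MonotoneArc).PairwiseDisjoint MonotoneArc.graph ∧
    ⋃ α ∈ A, α.graph = S

lemma HasArcDecomposition.mono {S : Set (ℝ × ℝ)} {m n : ℕ} (h : HasArcDecomposition S m)
    (hmn : m ≤ n) : HasArcDecomposition S n :=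
  let ⟨A, hA, hAS⟩ := h
  ⟨A, hA.trans hmn, hAS⟩

lemma HasArcDecomposition.biUnion {κ : Type*} {s : Finset κ} {S : κ → Set (ℝ × ℝ)} {n : ℕ}
    (h : ∀ k ∈ s, HasArcDecomposition (S k) n) (hdisj : (s : Set κ).PairwiseDisjoint S) :
    HasArcDecomposition (⋃ k ∈ s, S k) (#s * n) := by
  choose! A hcard hA hS using h
  have hsub {k : κ} (hk : k ∈ s) {α : MonotoneArc} (hα : α ∈ A k) : α.graph ⊆ S k :=
    hS k hk ▸ Set.subset_biUnion_of_mem (u := MonotoneArc.graph) hα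
  refine ⟨s.biUnion A, card_biUnion_le_card_mul s A n hcard, ?_, ?_⟩
  · rintro α hα β hβ hne
    obtain ⟨k, hk, hαk⟩ := mem_biUnion.1 hα
    obtain ⟨l, hl, hβl⟩ := mem_biUnion.1 hβ
    obtain rfl | hkl := eq_or_ne k l
    · exact hA k hk hαk hβl hne
    · exact (hdisj hk hl hkl).mono (hsub hk hαk) (hsub hl hβl)
  · rw [set_biUnion_biUnion]
    exact Set.iUnion₂_congr hS

lemma HasArcDecomposition.union {S T : Set (ℝ × ℝ)} {m n : ℕ} (hS : HasArcDecomposition S m)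
    (hT : HasArcDecomposition T n) (hST : Disjoint S T) : HasArcDecomposition (S ∪ T) (m + n) := by
  obtain ⟨A, hAcard, hA, rfl⟩ := hS
  obtain ⟨B, hBcard, hB, rfl⟩ := hT
  refine ⟨A ∪ B, (card_union_le A B).trans (add_le_add hAcard hBcard), ?_, ?_⟩
  · rw [coe_union, Set.pairwiseDisjoint_union]
    refine ⟨hA, hB, fun α hα β hβ _ => ?_⟩
    exact hST.mono (Set.subset_biUnion_of_mem hα) (Set.subset_biUnion_of_mem hβ)
  · exact set_biUnion_union A B _

lemma HasArcDecomposition.of_encard_le {S : Set (ℝ × ℝ)} {n : ℕ} (h : S.encard ≤ n) :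
    HasArcDecomposition S n := by
  have hS : S.Finite := Set.finite_of_encard_le_coe h
  let pointArc (p : ℝ × ℝ) : MonotoneArc :=
    ⟨{p.1}, Set.ordConnected_singleton, fun _ => p.2, continuousOn_const⟩
  have hgraph (p : ℝ × ℝ) : (pointArc p).graph = {p} := Set.graphOn_singleton _ _
  refine ⟨hS.toFinset.image pointArc, ?_, ?_, ?_⟩
  · rw [hS.encard_eq_coe_toFinset_card, Nat.cast_le] at h
    exact card_image_le.trans h
  · simp only [coe_image, hS.coe_toFinset]
    rintro _ ⟨p, -, rfl⟩ _ ⟨q, -, rfl⟩ hne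
    simpa only [Function.onFun, hgraph, Set.disjoint_singleton] using ne_of_apply_ne pointArc hne
  · simp only [mem_image, hS.mem_toFinset, Set.iUnion_exists, Set.biUnion_and',
      Set.iUnion_iUnion_eq_right, hgraph, Set.biUnion_of_singleton]

lemma hasArcDecomposition_strip (hF : ContDiff ℝ 1 F) (hI : IsOpen I) (hI' : I.OrdConnected)
    (hclosed : IsClosedMap (fiberMap F I))
    (hsimple : ∀ x ∈ I, ∀ y, F (x, y) = 0 → deriv (fun y => F (x, y)) y ≠ 0)
    {n : ℕ} (hn : ∀ x ∈ I, {y | F (x, y) = 0}.encard ≤ n) :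
    HasArcDecomposition {p | p.1 ∈ I ∧ F p = 0} n := by
  obtain rfl | ⟨x₀, hx₀⟩ := I.eq_empty_or_nonempty
  · exact ⟨∅, by simp⟩
  have huniq := existsUnique_section hF hI hI' hclosed
    (fun x hx => Set.finite_of_encard_le_coe (hn x hx)) hsimple
  let 𝒢 : Set C(I, ℝ) := {g | ∀ x : I, F (x, g x) = 0}
  have heq {g g' : C(I, ℝ)} (hg : g ∈ 𝒢) (hg' : g' ∈ 𝒢) {x : I} (h : g x = g' x) : g = g' :=
    (huniq x (hg' x)).unique ⟨h, hg⟩ ⟨rfl, hg'⟩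
  have hcard : 𝒢.encard ≤ n :=
    (Set.encard_le_encard_of_injOn (s := 𝒢) (f := fun g => g ⟨x₀, hx₀⟩)
      (fun _ hg => hg ⟨x₀, hx₀⟩) fun _ hg _ hg' => heq hg hg').trans (hn x₀ hx₀)
  have hfin : 𝒢.Finite := Set.finite_of_encard_le_coe hcard
  refine ⟨hfin.toFinset.image (MonotoneArc.ofSection hI'), ?_, ?_, ?_⟩
  · rw [hfin.encard_eq_coe_toFinset_card, Nat.cast_le] at hcard
    exact card_image_le.trans hcard
  · simp only [coe_image, hfin.coe_toFinset]
    rintro _ ⟨g, hg, rfl⟩ _ ⟨g', hg', rfl⟩ hne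
    refine Set.disjoint_left.2 fun p hp hp' => hne ?_
    obtain ⟨h, hgp⟩ := MonotoneArc.mem_graph_ofSection.1 hp
    obtain ⟨_, hgp'⟩ := MonotoneArc.mem_graph_ofSection.1 hp'
    rw [heq hg hg' (hgp.trans hgp'.symm)]
  · ext p
    simp only [mem_image, hfin.mem_toFinset, Set.mem_iUnion₂, exists_prop, exists_exists_and_eq_and,
      MonotoneArc.mem_graph_ofSection, Set.mem_ofPred_eq]
    constructor
    · rintro ⟨g, hg, h, hgp⟩
      exact ⟨h, by simpa only [hgp] using hg ⟨p.1, h⟩⟩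
    · rintro ⟨h, hp⟩
      obtain ⟨g, ⟨hgp, hg⟩, -⟩ := huniq ⟨p.1, h⟩ hp
      exact ⟨g, hg, h, hgp⟩

/-- The part of the line to the right of `c` and to the left of all points of `B` beyond `c`.
The value `c = ⊥` gives the part of the line to the left of `B`. -/
def gapAfter (B : Finset ℝ) (c : WithBot ℝ) : Set ℝ := {x | c < x ∧ ∀ b ∈ B, c < b → x < b}

lemma isOpen_gapAfter (B : Finset ℝ) (c : WithBot ℝ) : IsOpen (gapAfter B c) := by
  have hleft : IsOpen {x : ℝ | c < x} := by
    cases c with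
    | bot => simp
    | coe c => simp only [WithBot.coe_lt_coe]; exact isOpen_Ioi
  have hright : IsOpen {x | ∀ b ∈ B, c < b → x < b} := by
    rw [show {x | ∀ b ∈ B, c < b → x < b} = ⋂ b ∈ B.filter fun b : ℝ => c < b, Set.Iio b by
      ext x; simp]
    exact isOpen_biInter_finset fun b _ => isOpen_Iio
  exact hleft.inter hright

lemma ordConnected_gapAfter (B : Finset ℝ) (c : WithBot ℝ) : (gapAfter B c).OrdConnected :=
  ⟨fun _ hx _ hy _ hz => ⟨hx.1.trans_le (WithBot.coe_le_coe.2 hz.1),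
    fun b hb hcb => hz.2.trans_lt (hy.2 b hb hcb)⟩⟩

lemma gapAfter_subset_compl (B : Finset ℝ) (c : WithBot ℝ) : gapAfter B c ⊆ (B : Set ℝ)ᶜ :=
  fun x hx hxB => (hx.2 x hxB hx.1).false

lemma exists_mem_gapAfter_iff {B : Finset ℝ} {x : ℝ} :
    (∃ c ∈ insert ⊥ (B.image WithBot.some), x ∈ gapAfter B c) ↔ x ∉ B := by
  refine ⟨fun ⟨c, _, hx⟩ => gapAfter_subset_compl B c hx, fun hx => ?_⟩
  obtain ⟨c, hc, hmax⟩ := exists_max_image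
    ((insert ⊥ (B.image WithBot.some)).filter (· < (x : WithBot ℝ))) id ⟨⊥, by simp⟩
  rw [mem_filter] at hc
  refine ⟨c, hc.1, hc.2, fun b hb hcb => ?_⟩
  by_contra! hbx
  have hbx : b < x := hbx.lt_of_ne (ne_of_mem_of_not_mem hb hx)
  exact hcb.not_ge (hmax b (by simp [hb, hbx]))

lemma pairwiseDisjoint_gapAfter (B : Finset ℝ) :
    (↑(insert ⊥ (B.image WithBot.some)) : Set (WithBot ℝ)).PairwiseDisjoint (gapAfter B) := by
  have hlt {c c' : WithBot ℝ} (hc' : c' ∈ insert ⊥ (B.image WithBot.some)) (h : c < c') :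
      Disjoint (gapAfter B c) (gapAfter B c') := by
    obtain rfl | hc' := mem_insert.1 hc'
    · exact absurd h not_lt_bot
    obtain ⟨b, hb, rfl⟩ := mem_image.1 hc'
    exact Set.disjoint_left.2 fun x hx hx' => (hx.2 b hb h).not_gt (WithBot.coe_lt_coe.1 hx'.1)
  intro c hc c' hc' hne
  obtain h | h := hne.lt_or_gt
  · exact hlt hc' h
  · exact (hlt hc h).symm

lemma hasArcDecomposition_zeroSet_compl (hF : ContDiff ℝ 1 F) {B : Finset ℝ}
    (hclosed : ∀ I ⊆ (B : Set ℝ)ᶜ, IsClosedMap (fiberMap F I))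
    (hsimple : ∀ x ∉ B, ∀ y, F (x, y) = 0 → deriv (fun y => F (x, y)) y ≠ 0)
    {n : ℕ} (hn : ∀ x ∉ B, {y | F (x, y) = 0}.encard ≤ n) :
    HasArcDecomposition {p | p.1 ∉ B ∧ F p = 0} ((#B + 1) * n) := by
  have hcard : #(insert ⊥ (B.image WithBot.some)) = #B + 1 := by
    rw [card_insert_of_notMem (by simp), card_image_of_injective _ WithBot.coe_injective]
  have hgap (c : WithBot ℝ) : HasArcDecomposition {p | p.1 ∈ gapAfter B c ∧ F p = 0} n :=
    have hsub := gapAfter_subset_compl B c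
    hasArcDecomposition_strip hF (isOpen_gapAfter B c) (ordConnected_gapAfter B c)
      (hclosed _ hsub) (fun x hx => hsimple x (hsub hx)) fun x hx => hn x (hsub hx)
  have hunion : {p | p.1 ∉ B ∧ F p = 0} =
      ⋃ c ∈ insert ⊥ (B.image WithBot.some), {p | p.1 ∈ gapAfter B c ∧ F p = 0} := by
    ext p
    simp only [Set.mem_ofPred_eq, ← exists_mem_gapAfter_iff, Set.mem_iUnion₂, exists_prop,
      ← and_assoc, exists_and_right]
  rw [← hcard, hunion]
  exact HasArcDecomposition.biUnion (fun c _ => hgap c) fun c hc c' hc' hne =>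
    ((pairwiseDisjoint_gapAfter B hc hc' hne).preimage Prod.fst).mono (fun _ h => h.1)
      fun _ h => h.1

lemma hasArcDecomposition_zeroSet_lines {B : Finset ℝ} {n : ℕ}
    (hn : ∀ x ∈ B, {y | F (x, y) = 0}.encard ≤ n) :
    HasArcDecomposition {p | p.1 ∈ B ∧ F p = 0} (#B * n) := by
  have hunion : {p | p.1 ∈ B ∧ F p = 0} = ⋃ x ∈ B, Prod.mk x '' {y | F (x, y) = 0} := by
    ext ⟨x, y⟩
    simp [and_comm]
  rw [hunion]
  refine .biUnion (fun x hx => .of_encard_le ((Set.encard_image_le _ _).trans (hn x hx))) ?_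
  intro x _ x' _ hne
  refine Set.disjoint_left.2 ?_
  rintro _ ⟨y, -, rfl⟩ ⟨y', -, h⟩
  exact hne (congrArg Prod.fst h).symm

lemma hasArcDecomposition_zeroSet (hF : ContDiff ℝ 1 F) {B : Finset ℝ}
    (hclosed : ∀ I ⊆ (B : Set ℝ)ᶜ, IsClosedMap (fiberMap F I))
    (hsimple : ∀ x ∉ B, ∀ y, F (x, y) = 0 → deriv (fun y => F (x, y)) y ≠ 0)
    {n : ℕ} (hn : ∀ x, {y | F (x, y) = 0}.encard ≤ n) :
    HasArcDecomposition {p | F p = 0} ((#B + 1) * n + #B * n) := by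
  have hunion : {p | F p = 0} = {p | p.1 ∉ B ∧ F p = 0} ∪ {p | p.1 ∈ B ∧ F p = 0} := by
    ext p
    simp only [Set.mem_union, Set.mem_ofPred_eq, ← or_and_right, em', true_and]
  rw [hunion]
  exact (hasArcDecomposition_zeroSet_compl hF hclosed hsimple fun x _ => hn x).union
    (hasArcDecomposition_zeroSet_lines fun x _ => hn x)
    (Set.disjoint_left.2 fun p hp hp' => hp.1 hp'.1)

end Sections

/-! ### Algebraic curves -/

open Polynomial
open scoped Polynomial.Bivariate

section Fibers

variable (f : ℝ[X][Y])

lemma contDiff_evalEval : ContDiff ℝ 1 fun p : ℝ × ℝ => f.evalEval p.1 p.2 := by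
  simp only [evalEval, eval_eq_sum_range (p := f), eval_finsetSum, eval_mul, eval_pow, eval_C]
  refine ContDiff.sum fun k _ => .mul ?_ (contDiff_snd.pow k)
  simp only [← coe_aeval_eq_eval]
  exact ((f.coeff k).contDiff_aeval 1).comp contDiff_fst

lemma deriv_evalEval (x y : ℝ) :
    deriv (fun y => f.evalEval x y) y = (derivative f).evalEval x y := by
  simp only [← map_evalRingHom_eval, Polynomial.deriv, derivative_map]

variable {f}

lemma map_evalRingHom_ne_zero (hf : f.IsPrimitive) (x : ℝ) : f.map (evalRingHom x) ≠ 0 := by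
  intro h
  have hdvd : C (X - C x) ∣ f := (C_dvd_iff_dvd_coeff _ _).2 fun k => dvd_iff_isRoot.2 <| by
    simpa only [coeff_map, coeff_zero, coe_evalRingHom, IsRoot.def] using congrArg (coeff · k) h
  exact not_isUnit_X_sub_C x (hf _ hdvd)

lemma encard_zeros_evalEval_le (hf : f.IsPrimitive) (x : ℝ) :
    {y | f.evalEval x y = 0}.encard ≤ f.natDegree := by
  have hroots : {y | f.evalEval x y = 0} = (f.map (evalRingHom x)).roots.toFinset := by
    ext y
    simp [map_evalRingHom_ne_zero hf, map_evalRingHom_eval]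
  rw [hroots, Set.encard_coe_eq_coe_finsetCard, Nat.cast_le]
  exact (Multiset.toFinset_card_le _).trans ((card_roots' _).trans natDegree_map_le)

lemma continuous_cauchyBound_map_sub_C {I : Set ℝ} (hlc : ∀ x ∈ I, f.leadingCoeff.eval x ≠ 0)
    (hn : f.natDegree ≠ 0) :
    Continuous fun q : ℝ × I => (f.map (evalRingHom (q.2 : ℝ)) - C q.1).cauchyBound := by
  have hdeg (q : ℝ × I) : (f.map (evalRingHom (q.2 : ℝ)) - C q.1).natDegree = f.natDegree := by
    rw [natDegree_sub_C, natDegree_map_of_leadingCoeff_ne_zero _ (hlc q.2 q.2.2)]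
  have hcoeff (k : ℕ) :
      Continuous fun q : ℝ × I => (f.map (evalRingHom (q.2 : ℝ)) - C q.1).coeff k := by
    simp only [coeff_sub, coeff_map, coe_evalRingHom, coeff_C]
    split_ifs <;> fun_prop
  simp only [cauchyBound, leadingCoeff, hdeg]
  refine ((Continuous.finset_sup_apply fun k _ => (hcoeff k).nnnorm).div₀ (hcoeff _).nnnorm
    fun q => ?_).add continuous_const
  simpa [coeff_C, hn] using hlc q.2 q.2.2

lemma isProperMap_fiberMap_evalEval {I : Set ℝ} (hlc : ∀ x ∈ I, f.leadingCoeff.eval x ≠ 0)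
    (hn : f.natDegree ≠ 0) : IsProperMap (fiberMap (fun p => f.evalEval p.1 p.2) I) := by
  have hcont : Continuous (fiberMap (fun p => f.evalEval p.1 p.2) I) :=
    ((contDiff_evalEval f).continuous.comp
      ((continuous_subtype_val.comp continuous_fst).prodMk continuous_snd)).prodMk continuous_fst
  refine isProperMap_iff_isCompact_preimage.2 ⟨hcont, fun K hK => ?_⟩
  obtain ⟨b, hb⟩ := hK.bddAbove_image (continuous_cauchyBound_map_sub_C hlc hn).continuousOn
  refine ((hK.image continuous_snd).prod (isCompact_closedBall (0 : ℝ) b)).of_isClosed_subset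
    (hK.isClosed.preimage hcont) fun ⟨x, y⟩ hp => ⟨⟨_, hp, rfl⟩, mem_closedBall_zero_iff.2 ?_⟩
  set p := f.map (evalRingHom (x : ℝ)) - C (f.evalEval (x : ℝ) y)
  have hp0 : p ≠ 0 := ne_zero_of_natDegree_gt (n := 0) <| by
    rw [natDegree_sub_C, natDegree_map_of_leadingCoeff_ne_zero _ (hlc x x.2)]
    exact Nat.pos_of_ne_zero hn
  have hroot : p.IsRoot y := by simp [p, map_evalRingHom_eval]
  exact (NNReal.coe_le_coe.2 (hroot.norm_lt_cauchyBound hp0).le).trans (hb ⟨_, hp, rfl⟩)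

end Fibers

section Resultant

variable {R : Type*} [CommRing R]

lemma natDegree_det_le {n : Type*} [Fintype n] [DecidableEq n] (A : Matrix n n R[X]) {d : ℕ}
    (hA : ∀ i j, (A i j).natDegree ≤ d) : A.det.natDegree ≤ Fintype.card n * d := by
  rw [Matrix.det_apply]
  refine natDegree_sum_le_of_forall_le _ _ fun σ _ => (natDegree_smul_le _ _).trans ?_
  exact (natDegree_prod_le _ _).trans (sum_le_card_nsmul _ _ d fun i _ => hA _ _)

lemma natDegree_resultant_le {f g : R[X][Y]} (m n : ℕ) {d : ℕ}
    (hf : ∀ k, (f.coeff k).natDegree ≤ d) (hg : ∀ k, (g.coeff k).natDegree ≤ d) :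
    (resultant f g m n).natDegree ≤ (m + n) * d := by
  refine (natDegree_det_le _ fun i j => ?_).trans_eq (by rw [Fintype.card_fin])
  rw [sylvester, Matrix.of_apply]
  cases j using Fin.addCases <;> simp only [Fin.addCases_left, Fin.addCases_right] <;>
    split_ifs <;> simp [hf, hg]

lemma natDegree_coeff_derivative_le {f : R[X][Y]} {d : ℕ} (hf : ∀ k, (f.coeff k).natDegree ≤ d)
    (k : ℕ) : ((derivative f).coeff k).natDegree ≤ d := by
  rw [coeff_derivative, ← Nat.cast_succ]
  exact natDegree_mul_le.trans ((add_le_add (hf _) (natDegree_natCast _).le).trans_eq (add_zero d))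

lemma eval_resultant_eq_zero {f g : R[X][Y]} (h : f.natDegree ≠ 0 ∨ g.natDegree ≠ 0) {x y : R}
    (hf : f.evalEval x y = 0) (hg : g.evalEval x y = 0) : (resultant f g).eval x = 0 := by
  obtain ⟨p, q, -, -, hpq⟩ := exists_mul_add_mul_eq_C_resultant f g le_rfl le_rfl h
  simpa [hf, hg, evalEval_C] using (congrArg (evalEval x y) hpq).symm

variable [IsDomain R] [CharZero R] {f : R[X]}

lemma resultant_derivative_ne_zero [NormalizedGCDMonoid R] (hf : Irreducible f)
    (hn : f.natDegree ≠ 0) : resultant f (derivative f) ≠ 0 := by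
  have hinj : Function.Injective (algebraMap R (FractionRing R)) :=
    IsFractionRing.injective R (FractionRing R)
  have := charZero_of_injective_algebraMap hinj
  have hirr : Irreducible (f.map (algebraMap R (FractionRing R))) :=
    (hf.isPrimitive hn).irreducible_iff_irreducible_map_fraction_map.1 hf
  have hres := resultant_ne_zero _ _ hirr.separable
  rw [derivative_map, natDegree_map_eq_of_injective hinj, natDegree_map_eq_of_injective hinj,
    resultant_map_map] at hres
  exact ne_zero_of_map hres

lemma leadingCoeff_dvd_resultant_derivative (hn : f.natDegree ≠ 0) :
    f.leadingCoeff ∣ resultant f (derivative f) := by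
  rw [natDegree_derivative,
    resultant_deriv (natDegree_pos_iff_degree_pos.1 (Nat.pos_of_ne_zero hn)),
    mul_right_comm]
  exact dvd_mul_left _ _

end Resultant

theorem hasArcDecomposition_of_irreducible {f : ℝ[X][Y]} (hf : Irreducible f)
    (hn : f.natDegree ≠ 0) {d : ℕ} (hd : f.natDegree ≤ d)
    (hcoeff : ∀ k, (f.coeff k).natDegree ≤ d) :
    HasArcDecomposition {p | f.evalEval p.1 p.2 = 0} ((2 * d * d + 1) * d + 2 * d * d * d) := by
  set r := resultant f (derivative f)
  have hr (x : ℝ) : x ∉ r.roots.toFinset ↔ r.eval x ≠ 0 := by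
    rw [Multiset.mem_toFinset, mem_roots (resultant_derivative_ne_zero hf hn), IsRoot.def]
  have hcard : #r.roots.toFinset ≤ 2 * d * d := by
    refine (Multiset.toFinset_card_le _).trans ((card_roots' r).trans ?_)
    refine (natDegree_resultant_le _ _ hcoeff (natDegree_coeff_derivative_le hcoeff)).trans ?_
    have := natDegree_derivative_le f
    gcongr
    omega
  have hlc (x : ℝ) (hx : x ∉ r.roots.toFinset) : f.leadingCoeff.eval x ≠ 0 :=
    fun h => (hr x).1 hx (eval_eq_zero_of_dvd_of_eval_eq_zero
      (leadingCoeff_dvd_resultant_derivative hn) h)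
  refine (hasArcDecomposition_zeroSet (contDiff_evalEval f)
    (fun I hI => (isProperMap_fiberMap_evalEval (fun x hx => hlc x (hI hx)) hn).isClosedMap)
    (fun x hx y hy hy' => (hr x).1 hx (eval_resultant_eq_zero (.inl hn) hy ?_))
    (encard_zeros_evalEval_le (hf.isPrimitive hn))).mono ?_
  · rwa [← deriv_evalEval]
  · gcongr

section Bivariate

variable {R : Type*} [CommRing R]

lemma evalEval_equivMvPolynomial_symm (f : MvPolynomial (Fin 2) R) (x y : R) :
    ((Bivariate.equivMvPolynomial R).symm f).evalEval x y = MvPolynomial.eval ![x, y] f := by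
  induction f using MvPolynomial.induction_on with
  | C a => simp
  | add p q hp hq => simp only [map_add, evalEval_add, hp, hq]
  | mul_X p i hp =>
    rw [map_mul, evalEval_mul, hp, map_mul]
    fin_cases i <;> simp [evalEval_C]

lemma equivMvPolynomial_symm_eq_sum (f : MvPolynomial (Fin 2) R) :
    (Bivariate.equivMvPolynomial R).symm f =
      ∑ s ∈ f.support, C (C (f.coeff s) * X ^ s 0) * X ^ s 1 := by
  conv_lhs => rw [f.as_sum, map_sum]
  refine sum_congr rfl fun s _ => ?_
  rw [MvPolynomial.monomial_eq, map_mul, Finsupp.prod_fintype _ _ (by simp)]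
  simp [mul_assoc]

lemma natDegree_equivMvPolynomial_symm_le (f : MvPolynomial (Fin 2) R) :
    ((Bivariate.equivMvPolynomial R).symm f).natDegree ≤ f.degreeOf 1 := by
  rw [equivMvPolynomial_symm_eq_sum]
  exact natDegree_sum_le_of_forall_le _ _ fun s hs =>
    (natDegree_C_mul_X_pow_le _ _).trans (MvPolynomial.monomial_le_degreeOf 1 hs)

lemma natDegree_coeff_equivMvPolynomial_symm_le {R : Type*} [CommRing R]
    (f : MvPolynomial (Fin 2) R) (k : ℕ) :
    (((Bivariate.equivMvPolynomial R).symm f).coeff k).natDegree ≤ f.degreeOf 0 := by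
  rw [equivMvPolynomial_symm_eq_sum, finsetSum_coeff]
  refine natDegree_sum_le_of_forall_le _ _ fun s hs => ?_
  rw [coeff_C_mul_X_pow]
  split_ifs
  · exact (natDegree_C_mul_X_pow_le _ _).trans (MvPolynomial.monomial_le_degreeOf 0 hs)
  · simp

end Bivariate

/-! ### Counting incidences -/

lemma le_mul_rpow_of_cube_le {X a b K : ℕ} (h : X ^ 3 ≤ K * (a ^ 2 * b ^ 2)) :
    (X : ℝ) ≤ K * ((a : ℝ) ^ (2 / 3 : ℝ) * (b : ℝ) ^ (2 / 3 : ℝ)) := by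
  have hcube (n : ℕ) : ((n : ℝ) ^ (2 / 3 : ℝ)) ^ 3 = (n : ℝ) ^ 2 := by
    rw [← Real.rpow_mul_natCast n.cast_nonneg, ← Real.rpow_natCast]
    norm_num
  refine le_of_pow_le_pow_left₀ three_ne_zero (by positivity) ?_
  rw [mul_pow, mul_pow, hcube, hcube]
  exact_mod_cast h.trans (Nat.mul_le_mul_right _ (Nat.le_self_pow three_ne_zero K))

section ArcFamily

variable {ι : Type*} [Fintype ι] {α : ι → MonotoneArc} {P : Finset (ℝ × ℝ)}

lemma card_arcEdges_le {M : ℕ} (h : ∀ i j, i ≠ j → ((α i).graph ∩ (α j).graph).Finite ∧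
    ((α i).graph ∩ (α j).graph).ncard ≤ M) :
    (#(arcEdges α P) : ℝ) ≤
      6 * #P + 72 * M * ((#P : ℝ) ^ (2 / 3 : ℝ) * (Fintype.card ι : ℝ) ^ (2 / 3 : ℝ)) := by
  obtain hlin | hcube := card_arcEdges_le_or_cube_le (P := P) h
  · refine le_add_of_le_of_nonneg ?_ (by positivity)
    exact_mod_cast hlin
  · refine le_add_of_nonneg_of_le (by positivity) ?_
    exact_mod_cast le_mul_rpow_of_cube_le (K := 72 * M) (hcube.trans_eq (by ring))

end ArcFamily

/-- The number of incidences between a set of points and a set of curves. -/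
noncomputable def incidences {X : Type*} (P : Finset X) (Γ : Finset (Set X)) : ℕ :=
  ∑ p ∈ P, #{γ ∈ Γ | p ∈ γ}

variable {P : Finset (ℝ × ℝ)} {Γ : Finset (Set (ℝ × ℝ))}

/-- A family of arcs obtained by cutting each curve of `Γ` into pairwise disjoint arcs, where
`curve i` is the curve containing the arc `arc i`. -/
structure ArcRefinement (Γ : Finset (Set (ℝ × ℝ))) (ι : Type*) where
  arc : ι → MonotoneArc
  curve : ι → Set (ℝ × ℝ)
  curve_mem : ∀ i, curve i ∈ Γ
  graph_subset : ∀ i, (arc i).graph ⊆ curve i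
  disjoint : ∀ i j, i ≠ j → curve i = curve j → Disjoint (arc i).graph (arc j).graph
  exists_mem_graph : ∀ γ ∈ Γ, ∀ p ∈ γ, ∃ i, curve i = γ ∧ p ∈ (arc i).graph

lemma exists_arcRefinement {n : ℕ} (harc : ∀ γ ∈ Γ, HasArcDecomposition γ n) :
    ∃ (ι : Type) (_ : Fintype ι), Nonempty (ArcRefinement Γ ι) ∧ Fintype.card ι ≤ n * #Γ := by
  choose A hcard hdisj hunion using fun γ : Γ => harc γ γ.2
  refine ⟨Σ γ : Γ, A γ, inferInstance, ⟨⟨fun i => i.2, fun i => i.1, fun i => i.1.2,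
    fun i => ?_, ?_, fun γ hγ p hp => ?_⟩⟩, ?_⟩
  · exact hunion i.1 ▸ Set.subset_biUnion_of_mem (u := MonotoneArc.graph) i.2.2
  · rintro ⟨γ, a⟩ ⟨γ', b⟩ hab hγ
    obtain rfl : γ = γ' := Subtype.ext hγ
    exact hdisj γ a.2 b.2 fun h => hab (by rw [Subtype.ext h])
  · obtain ⟨a, ha, hpa⟩ := Set.mem_iUnion₂.1 ((hunion ⟨γ, hγ⟩).ge hp)
    exact ⟨⟨⟨γ, hγ⟩, a, ha⟩, rfl, hpa⟩
  · simp only [Fintype.card_sigma, Fintype.card_coe]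
    exact (sum_le_card_nsmul _ _ n fun γ _ => hcard γ).trans_eq (by simp [mul_comm])

namespace ArcRefinement

variable {ι : Type*} (R : ArcRefinement Γ ι)

lemma inter_graph_of_ne {M : ℕ}
    (hinter : ∀ γ ∈ Γ, ∀ γ' ∈ Γ, γ ≠ γ' → (γ ∩ γ').Finite ∧ (γ ∩ γ').ncard ≤ M) {i j : ι}
    (hij : i ≠ j) : ((R.arc i).graph ∩ (R.arc j).graph).Finite ∧
      ((R.arc i).graph ∩ (R.arc j).graph).ncard ≤ M := by
  by_cases hcurve : R.curve i = R.curve j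
  · simp [(R.disjoint i j hij hcurve).inter_eq]
  · obtain ⟨hfin, hcard⟩ := hinter _ (R.curve_mem i) _ (R.curve_mem j) hcurve
    have hle := Set.inter_subset_inter (R.graph_subset i) (R.graph_subset j)
    exact ⟨hfin.subset hle, (Set.ncard_le_ncard hle hfin).trans hcard⟩

variable [Fintype ι]

lemma incidences_le : incidences P Γ ≤ ∑ i, #((R.arc i).pointsOn P) := calc
  incidences P Γ ≤ ∑ p ∈ P, #{i | p ∈ (R.arc i).graph} :=
    sum_le_sum fun p _ => card_le_card_of_surjOn R.curve fun γ hγ => by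
      obtain ⟨hγ, hp⟩ := mem_filter.1 hγ
      obtain ⟨i, hi, hpi⟩ := R.exists_mem_graph γ hγ p hp
      exact ⟨i, mem_filter.2 ⟨mem_univ _, hpi⟩, hi⟩
  _ = ∑ i, #((R.arc i).pointsOn P) :=
    sum_card_bipartiteAbove_eq_sum_card_bipartiteBelow fun p i => p ∈ (R.arc i).graph

lemma card_filter_mem_graph_le (p q : ℝ × ℝ) :
    #{i | p ∈ (R.arc i).graph ∧ q ∈ (R.arc i).graph} ≤ #{γ ∈ Γ | p ∈ γ ∧ q ∈ γ} := by
  refine card_le_card_of_injOn R.curve (fun i hi => ?_) fun i hi j hj hcurve => ?_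
  · exact mem_filter.2 ⟨R.curve_mem i,
      (mem_filter.1 hi).2.imp (R.graph_subset i ·) (R.graph_subset i ·)⟩
  · by_contra hij
    exact Set.disjoint_left.1 (R.disjoint i j hij hcurve) (mem_filter.1 hi).2.1
      (mem_filter.1 hj).2.1

end ArcRefinement

theorem incidences_le_of_hasArcDecomposition {n m M : ℕ}
    (harc : ∀ γ ∈ Γ, HasArcDecomposition γ n)
    (hinter : ∀ γ ∈ Γ, ∀ γ' ∈ Γ, γ ≠ γ' → (γ ∩ γ').Finite ∧ (γ ∩ γ').ncard ≤ M)
    (hpair : ∀ p ∈ P, ∀ q ∈ P, p ≠ q → #{γ ∈ Γ | p ∈ γ ∧ q ∈ γ} ≤ m) :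
    (incidences P Γ : ℝ) ≤ n * #Γ +
      m * (6 * #P + 72 * M * ((#P : ℝ) ^ (2 / 3 : ℝ) * (n * #Γ : ℝ) ^ (2 / 3 : ℝ))) := by
  obtain ⟨ι, _, ⟨R⟩, hι⟩ := exists_arcRefinement harc
  have hι' : (Fintype.card ι : ℝ) ≤ n * #Γ := by exact_mod_cast hι
  have hedges := card_arcEdges_le (P := P) fun i j => R.inter_graph_of_ne hinter
  calc (incidences P Γ : ℝ)
    _ ≤ (∑ i, #((R.arc i).pointsOn P) : ℕ) := by exact_mod_cast R.incidences_le
    _ ≤ Fintype.card ι + m * #(arcEdges R.arc P) := by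
        exact_mod_cast sum_card_pointsOn_le fun p hp q hq hpq =>
          (R.card_filter_mem_graph_le p q).trans (hpair p hp q hq hpq)
    _ ≤ n * #Γ + m * (6 * #P +
          72 * M * ((#P : ℝ) ^ (2 / 3 : ℝ) * (n * #Γ : ℝ) ^ (2 / 3 : ℝ))) := by
        gcongr
        refine hedges.trans ?_
        gcongr

/-- A union of vertical lines. -/
def IsVertical (S : Set (ℝ × ℝ)) : Prop := ∀ ⦃p⦄, p ∈ S → ∀ y, (p.1, y) ∈ S

lemma incidences_le_card_of_isVertical (hvert : ∀ γ ∈ Γ, IsVertical γ)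
    (hinter : ∀ γ ∈ Γ, ∀ γ' ∈ Γ, γ ≠ γ' → (γ ∩ γ').Finite) : incidences P Γ ≤ #P := by
  refine (sum_le_card_nsmul _ _ 1 fun p _ => card_le_one.2 fun γ hγ γ' hγ' => ?_).trans_eq
    (by simp)
  obtain ⟨hγ, hp⟩ := mem_filter.1 hγ
  obtain ⟨hγ', hp'⟩ := mem_filter.1 hγ'
  by_contra hne
  refine Set.infinite_of_injective_forall_mem (f := fun y : ℝ => (p.1, y))
    (fun y y' h => (Prod.ext_iff.1 h).2) (fun y => ?_) (hinter γ hγ γ' hγ' hne)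
  exact ⟨hvert γ hγ hp y, hvert γ' hγ' hp' y⟩

lemma incidences_filter_add_filter_not (Q : Set (ℝ × ℝ) → Prop) :
    incidences P {γ ∈ Γ | Q γ} + incidences P {γ ∈ Γ | ¬ Q γ} = incidences P Γ := by
  simp only [incidences, ← sum_add_distrib]
  refine sum_congr rfl fun p _ => ?_
  rw [filter_comm, filter_comm (fun γ => ¬ Q γ), card_filter_add_card_filter_not]

theorem incidences_le {n m M : ℕ} (harc : ∀ γ ∈ Γ, IsVertical γ ∨ HasArcDecomposition γ n)
    (hinter : ∀ γ ∈ Γ, ∀ γ' ∈ Γ, γ ≠ γ' → (γ ∩ γ').Finite ∧ (γ ∩ γ').ncard ≤ M)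
    (hpair : ∀ p ∈ P, ∀ q ∈ P, p ≠ q → #{γ ∈ Γ | p ∈ γ ∧ q ∈ γ} ≤ m) :
    (incidences P Γ : ℝ) ≤ (1 + n + 6 * m + 72 * m * M * (n : ℝ) ^ (2 / 3 : ℝ)) *
      ((#P : ℝ) ^ (2 / 3 : ℝ) * (#Γ : ℝ) ^ (2 / 3 : ℝ) + #P + #Γ) := by
  have hvert : incidences P {γ ∈ Γ | IsVertical γ} ≤ #P :=
    incidences_le_card_of_isVertical (fun γ hγ => (mem_filter.1 hγ).2) fun γ hγ γ' hγ' hne =>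
      (hinter γ (mem_of_mem_filter γ hγ) γ' (mem_of_mem_filter γ' hγ') hne).1
  have hgraph := incidences_le_of_hasArcDecomposition (P := P) (Γ := {γ ∈ Γ | ¬ IsVertical γ})
    (fun γ hγ => (harc γ (mem_of_mem_filter γ hγ)).resolve_left (mem_filter.1 hγ).2)
    (fun γ hγ γ' hγ' => hinter γ (mem_of_mem_filter γ hγ) γ' (mem_of_mem_filter γ' hγ'))
    fun p hp q hq hpq =>
      (card_le_card (filter_subset_filter _ (filter_subset _ Γ))).trans (hpair p hp q hq hpq)
  have hcard : (#{γ ∈ Γ | ¬ IsVertical γ} : ℝ) ≤ #Γ := by exact_mod_cast card_filter_le _ _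
  set T := (#P : ℝ) ^ (2 / 3 : ℝ) * (#Γ : ℝ) ^ (2 / 3 : ℝ)
  set K := 72 * m * M * (n : ℝ) ^ (2 / 3 : ℝ)
  have hterms : 0 ≤ K * (#P + #Γ) + (1 + n + 6 * m) * T + n * #P + (1 + 6 * m) * #Γ := by
    positivity
  calc (incidences P Γ : ℝ)
    _ = (incidences P {γ ∈ Γ | IsVertical γ} : ℝ) + incidences P {γ ∈ Γ | ¬ IsVertical γ} := by
        exact_mod_cast (incidences_filter_add_filter_not _).symm
    _ ≤ #P + (n * #Γ + m * (6 * #P +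
          72 * M * ((#P : ℝ) ^ (2 / 3 : ℝ) * (n * #Γ : ℝ) ^ (2 / 3 : ℝ)))) := by
        refine add_le_add (by exact_mod_cast hvert) (hgraph.trans ?_)
        gcongr
    _ = #P + n * #Γ + 6 * m * #P + K * T := by
        rw [Real.mul_rpow n.cast_nonneg (Nat.cast_nonneg _)]
        ring
    _ ≤ (1 + n + 6 * m + K) * (T + #P + #Γ) := by linarith

lemma isVertical_or_hasArcDecomposition {f : MvPolynomial (Fin 2) ℝ} (hf : Irreducible f) {d : ℕ}
    (hd : f.totalDegree ≤ d) :
    IsVertical {p | MvPolynomial.eval ![p.1, p.2] f = 0} ∨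
      HasArcDecomposition {p | MvPolynomial.eval ![p.1, p.2] f = 0}
        ((2 * d * d + 1) * d + 2 * d * d * d) := by
  simp only [← evalEval_equivMvPolynomial_symm]
  set g := (Bivariate.equivMvPolynomial ℝ).symm f
  have hdeg (i : Fin 2) : f.degreeOf i ≤ d := (f.degreeOf_le_totalDegree i).trans hd
  by_cases hg : g.natDegree = 0
  · left
    rw [eq_C_of_natDegree_eq_zero hg]
    intro p hp y
    simpa only [Set.mem_ofPred_eq, evalEval_C] using hp
  · exact .inr <| hasArcDecomposition_of_irreducible
      ((MulEquiv.irreducible_iff (Bivariate.equivMvPolynomial ℝ).symm).2 hf) hg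
      ((natDegree_equivMvPolynomial_symm_le f).trans (hdeg 1))
      fun k => (natDegree_coeff_equivMvPolynomial_symm_le f k).trans (hdeg 0)

end IncidenceBound

/-- Szemerédi–Trotter type incidence bound for points and bounded-degree irreducible
algebraic curves with bounded multiple intersections (CEGSW / Pach–Sharir). -/
theorem incidence_bound_curves (d M : ℕ) (hd : 1 ≤ d) (hM : 1 ≤ M) :
    ∃ C : ℝ, 0 < C ∧
      ∀ (P : Finset (ℝ × ℝ)) (Γ : Finset (Set (ℝ × ℝ))),
        (∀ γ ∈ Γ, ∃ f : MvPolynomial (Fin 2) ℝ, Irreducible f ∧ f.totalDegree ≤ d ∧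
          γ = {p : ℝ × ℝ | MvPolynomial.eval ![p.1, p.2] f = 0}) →
        (∀ γ ∈ Γ, ∀ γ' ∈ Γ, γ ≠ γ' → (γ ∩ γ').Finite ∧ (γ ∩ γ').ncard ≤ M) →
        (∀ p ∈ P, ∀ q ∈ P, p ≠ q → (Γ.filter (fun γ => p ∈ γ ∧ q ∈ γ)).card ≤ M) →
        ((∑ p ∈ P, (Γ.filter (fun γ => p ∈ γ)).card : ℕ) : ℝ) ≤
          C * ((P.card : ℝ) ^ (2/3 : ℝ) * (Γ.card : ℝ) ^ (2/3 : ℝ)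
            + (P.card : ℝ) + (Γ.card : ℝ)) := by
  refine ⟨_, ?_, fun P Γ hcurve hinter hpair =>
    IncidenceBound.incidences_le (n := (2 * d * d + 1) * d + 2 * d * d * d) (fun γ hγ => ?_)
      hinter hpair⟩
  · positivity
  · obtain ⟨f, hf, hfd, rfl⟩ := hcurve γ hγ
    exact IncidenceBound.isVertical_or_hasArcDecomposition hf hfd
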